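/- arXiv:1311.2740 — 2 statements merged into one kernel-verified Lean document; each statement's English description precedes it below -/
import Mathlib

section
/- Let λ0 ∈ ℝ and let g be an exchangeable prior. Let d be a design with τ0′ C_{d22} τ0 > 0 for g-almost every τ0 and m_d g-integrable. Then d is E_{g,λ0}-optimal if and only if E_{g,λ0}(d) = n y*/(t−1). -/
open Matrix MeasureTheory
open scoped Classical

noncomputable section

/-- A treatment sequence: assigns a treatment in `Fin t` to each period in `Fin p`. -/
abbrev TrtSeq (p t : ℕ) := Fin p → Fin t

/-- Treatment/period incidence matrix `T_s`. -/
def Tmat {p t : ℕ} (s : TrtSeq p t) : Matrix (Fin p) (Fin t) ℝ :=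
  Matrix.of fun k i => if s k = i then 1 else 0

/-- Carryover incidence matrix `F_s`: first row zero, row `k` records the treatment
in period `k-1`. -/
def Fmat {p t : ℕ} (s : TrtSeq p t) : Matrix (Fin p) (Fin t) ℝ :=
  Matrix.of fun k i =>
    if (k : ℕ) = 0 then 0
    else if s ⟨(k : ℕ) - 1, Nat.lt_of_le_of_lt (Nat.sub_le _ _) k.isLt⟩ = i then 1 else 0

/-- The all-ones `m × m` matrix `J_m`. -/
def Jmat (m : ℕ) : Matrix (Fin m) (Fin m) ℝ := Matrix.of fun _ _ => 1

/-- `B_t = I_t - J_t / t`. -/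
def Bmat (t : ℕ) : Matrix (Fin t) (Fin t) ℝ := 1 - ((t : ℝ))⁻¹ • Jmat t

/-- `B̃ = Σ⁻¹ - Σ⁻¹ J_p Σ⁻¹ / (1_p' Σ⁻¹ 1_p)`. -/
def Btil {p : ℕ} (S : Matrix (Fin p) (Fin p) ℝ) : Matrix (Fin p) (Fin p) ℝ :=
  S⁻¹ - (((fun _ => (1 : ℝ)) : Fin p → ℝ) ⬝ᵥ (S⁻¹ *ᵥ fun _ => (1 : ℝ)))⁻¹ •
    (S⁻¹ * Jmat p * S⁻¹)

/-- `G_1(s) = T_s`, `G_2(s) = F_s`. -/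
def Gmat {p t : ℕ} (i : Fin 2) (s : TrtSeq p t) : Matrix (Fin p) (Fin t) ℝ :=
  if i = 0 then Tmat s else Fmat s

/-- An approximate design: nonnegative weights summing to one. -/
def IsDesign {p t : ℕ} (w : TrtSeq p t → ℝ) : Prop :=
  (∀ s, 0 ≤ w s) ∧ ∑ s : TrtSeq p t, w s = 1

/-- `Ĉ_{sij} = B_t G_i(s)' B̃ G_j(s) B_t`. -/
def Chat {p t : ℕ} (S : Matrix (Fin p) (Fin p) ℝ) (s : TrtSeq p t) (i j : Fin 2) :
    Matrix (Fin t) (Fin t) ℝ :=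
  Bmat t * (Gmat i s)ᵀ * Btil S * Gmat j s * Bmat t

/-- `c_{sij} = tr Ĉ_{sij}`. -/
def cseq {p t : ℕ} (S : Matrix (Fin p) (Fin p) ℝ) (s : TrtSeq p t) (i j : Fin 2) : ℝ :=
  (Chat S s i j).trace

/-- `Ĉ_{dij} = n ∑_s p_s Ĉ_{sij}`. -/
def ChatD {p t : ℕ} (n : ℕ) (S : Matrix (Fin p) (Fin p) ℝ) (w : TrtSeq p t → ℝ)
    (i j : Fin 2) : Matrix (Fin t) (Fin t) ℝ :=
  (n : ℝ) • ∑ s : TrtSeq p t, w s • Chat S s i j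

/-- `C_{dij} = Ĉ_{dij} - n (∑_s p_s G_i(s) B_t)' B̃ (∑_s p_s G_j(s) B_t)`. -/
def CD {p t : ℕ} (n : ℕ) (S : Matrix (Fin p) (Fin p) ℝ) (w : TrtSeq p t → ℝ)
    (i j : Fin 2) : Matrix (Fin t) (Fin t) ℝ :=
  ChatD n S w i j -
    (n : ℝ) • ((∑ s : TrtSeq p t, w s • (Gmat i s * Bmat t))ᵀ * Btil S *
      (∑ s : TrtSeq p t, w s • (Gmat j s * Bmat t)))

/-- `c_{dij} = tr Ĉ_{dij} = n ∑_s p_s c_{sij}`. -/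
def cD {p t : ℕ} (n : ℕ) (S : Matrix (Fin p) (Fin p) ℝ) (w : TrtSeq p t → ℝ)
    (i j : Fin 2) : ℝ :=
  (ChatD n S w i j).trace

/-- Fisher information matrix `C_{d,τ0,λ0}` for the direct treatment effects under the
proportional model. -/
def CInfo {p t : ℕ} (n : ℕ) (S : Matrix (Fin p) (Fin p) ℝ) (w : TrtSeq p t → ℝ)
    (τ0 : Fin t → ℝ) (l0 : ℝ) : Matrix (Fin t) (Fin t) ℝ :=
  CD n S w 0 0 + l0 • (CD n S w 0 1 + CD n S w 1 0) + (l0 ^ 2) • CD n S w 1 1 -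
    (τ0 ⬝ᵥ (CD n S w 1 1 *ᵥ τ0))⁻¹ •
      ((CD n S w 0 1 + l0 • CD n S w 1 1) * vecMulVec τ0 τ0 *
        (CD n S w 1 0 + l0 • CD n S w 1 1))

/-- Permutation matrix `S_σ` with `(S_σ)_{j,i} = 1` iff `i = σ j`. -/
def Smat {t : ℕ} (σ : Equiv.Perm (Fin t)) : Matrix (Fin t) (Fin t) ℝ :=
  Matrix.of fun j i => if i = σ j then 1 else 0

/-- The relabelled sequence `σ ∘ s`. -/
def permSeq {p t : ℕ} (σ : Equiv.Perm (Fin t)) (s : TrtSeq p t) : TrtSeq p t := fun k => σ (s k)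

/-- The design `σ d`, with weights `(σd)_s = p_{σ⁻¹ ∘ s}`. -/
def permDesign {p t : ℕ} (σ : Equiv.Perm (Fin t)) (w : TrtSeq p t → ℝ) : TrtSeq p t → ℝ :=
  fun s => w (permSeq σ⁻¹ s)

/-- A design is symmetric if its weights are invariant under treatment relabelling. -/
def IsSymmetricDesign {p t : ℕ} (w : TrtSeq p t → ℝ) : Prop :=
  ∀ (σ : Equiv.Perm (Fin t)) (s : TrtSeq p t), w (permSeq σ s) = w s

/-- The symmetrized design `d*` with weights `p*_s = (1/t!) ∑_σ p_{σ⁻¹ ∘ s}`. -/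
def symmetrize {p t : ℕ} (w : TrtSeq p t → ℝ) : TrtSeq p t → ℝ :=
  fun s => ((Nat.factorial t : ℝ))⁻¹ * ∑ σ : Equiv.Perm (Fin t), permDesign σ w s

/-- `q_s(x) = c_{s11} + 2 c_{s12} x + c_{s22} x²`. -/
def qSeq {p t : ℕ} (S : Matrix (Fin p) (Fin p) ℝ) (s : TrtSeq p t) (x : ℝ) : ℝ :=
  cseq S s 0 0 + 2 * cseq S s 0 1 * x + cseq S s 1 1 * x ^ 2

/-- `q(x) = max_{s ∈ S} q_s(x)`. -/
def qMax (p t : ℕ) (S : Matrix (Fin p) (Fin p) ℝ) (x : ℝ) : ℝ :=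
  sSup (Set.range fun s : TrtSeq p t => qSeq S s x)

/-- `y* = inf_x q(x)`. -/
def yStar (p t : ℕ) (S : Matrix (Fin p) (Fin p) ℝ) : ℝ := ⨅ x : ℝ, qMax p t S x

/-- `q_d(x) = ∑_s p_s q_s(x)`. -/
def qD {p t : ℕ} (S : Matrix (Fin p) (Fin p) ℝ) (w : TrtSeq p t → ℝ) (x : ℝ) : ℝ :=
  ∑ s : TrtSeq p t, w s * qSeq S s x

/-- `x_d = -c_{d12}/c_{d22}`. -/
def xD {p t : ℕ} (n : ℕ) (S : Matrix (Fin p) (Fin p) ℝ) (w : TrtSeq p t → ℝ) : ℝ :=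
  -(cD n S w 0 1) / cD n S w 1 1

/-- An exchangeable prior: a probability measure on `{τ : 1'τ = 0, τ ≠ 0}` that is
invariant under all coordinate permutations of `ℝ^t`. -/
def IsExchangeablePrior {t : ℕ} (g : Measure (Fin t → ℝ)) : Prop :=
  IsProbabilityMeasure g ∧
    g {τ : Fin t → ℝ | ¬((∑ i, τ i) = 0 ∧ τ ≠ 0)} = 0 ∧
    ∀ σ : Equiv.Perm (Fin t), Measure.map (fun τ i => τ (σ i)) g = g

/-- `m_d(τ0) = min {ℓ' C_{d,τ0,λ0} ℓ : 1'ℓ = 0, ℓ'ℓ = 1}`. -/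
def mD {p t : ℕ} (n : ℕ) (S : Matrix (Fin p) (Fin p) ℝ) (w : TrtSeq p t → ℝ) (l0 : ℝ)
    (τ0 : Fin t → ℝ) : ℝ :=
  sInf {v : ℝ | ∃ l : Fin t → ℝ, (∑ i, l i) = 0 ∧ l ⬝ᵥ l = 1 ∧
    v = l ⬝ᵥ (CInfo n S w τ0 l0 *ᵥ l)}

/-- The E-criterion value `E_{g,λ0}(d) = ∫ m_d(τ0) g(dτ0)`. -/
def Ecrit {p t : ℕ} (n : ℕ) (S : Matrix (Fin p) (Fin p) ℝ) (g : Measure (Fin t → ℝ))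
    (l0 : ℝ) (w : TrtSeq p t → ℝ) : ℝ :=
  ∫ τ0, mD n S w l0 τ0 ∂g

/-- Competing designs for E-optimality: designs with a.e. positive `τ0' C_{d22} τ0`
and `g`-integrable `m_d`. -/
def EAdmissible {p t : ℕ} (n : ℕ) (S : Matrix (Fin p) (Fin p) ℝ) (g : Measure (Fin t → ℝ))
    (l0 : ℝ) (w : TrtSeq p t → ℝ) : Prop :=
  IsDesign w ∧ (∀ᵐ τ0 ∂g, 0 < τ0 ⬝ᵥ (CD n S w 1 1 *ᵥ τ0)) ∧
    Integrable (mD n S w l0) g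

/-- `d` is `E_{g,λ0}`-optimal. -/
def EOptimal {p t : ℕ} (n : ℕ) (S : Matrix (Fin p) (Fin p) ℝ) (g : Measure (Fin t → ℝ))
    (l0 : ℝ) (w : TrtSeq p t → ℝ) : Prop :=
  ∀ w' : TrtSeq p t → ℝ, EAdmissible n S g l0 w' → Ecrit n S g l0 w' ≤ Ecrit n S g l0 w

/-- A pseudo symmetric design: treatments equireplicated in each period,
and all `C_{dij}` completely symmetric. -/
def IsPseudoSymmetric {p t : ℕ} (n : ℕ) (S : Matrix (Fin p) (Fin p) ℝ)
    (w : TrtSeq p t → ℝ) : Prop :=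
  (∀ (k : Fin p) (i : Fin t),
    (∑ s ∈ Finset.univ.filter fun s : TrtSeq p t => s k = i, w s) = 1 / (t : ℝ)) ∧
  ∀ i j : Fin 2, ∃ a b : ℝ, CD n S w i j = a • (1 : Matrix (Fin t) (Fin t) ℝ) + b • Jmat t

/-- Eigenvalues of a (Hermitian) matrix sorted increasingly with multiplicity. -/
def sortedEigs {t : ℕ} (C : Matrix (Fin t) (Fin t) ℝ) : Fin t → ℝ :=
  if h : C.IsHermitian then (fun i => h.eigenvalues (Tuple.sort h.eigenvalues i))
  else fun _ => 0

/-- `Φ_D(C) = (∏_{i=1}^{t-1} a_i)^{1/(t-1)}` (eigenvalues sorted increasingly). -/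
def PhiD {t : ℕ} (C : Matrix (Fin t) (Fin t) ℝ) : ℝ :=
  (∏ i ∈ Finset.univ.filter fun i : Fin t => (i : ℕ) ≠ 0, sortedEigs C i) ^ (((t : ℝ) - 1)⁻¹)

/-- `Φ_A(C) = (t-1)(∑_{i=1}^{t-1} a_i⁻¹)⁻¹` if `a_1 > 0`, else `0`. -/
def PhiA {t : ℕ} (C : Matrix (Fin t) (Fin t) ℝ) : ℝ :=
  if ∀ i : Fin t, (i : ℕ) ≠ 0 → 0 < sortedEigs C i then
    ((t : ℝ) - 1) *
      (∑ i ∈ Finset.univ.filter fun i : Fin t => (i : ℕ) ≠ 0, (sortedEigs C i)⁻¹)⁻¹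
  else 0

/-- `Φ_T(C) = tr(C)/(t-1)`. -/
def PhiT {t : ℕ} (C : Matrix (Fin t) (Fin t) ℝ) : ℝ := C.trace / ((t : ℝ) - 1)

/-- The criterion value `∫ Φ(C_{d,τ0,λ0}) g(dτ0)`. -/
def PhiCrit {p t : ℕ} (n : ℕ) (S : Matrix (Fin p) (Fin p) ℝ)
    (Phi : Matrix (Fin t) (Fin t) ℝ → ℝ) (g : Measure (Fin t → ℝ)) (l0 : ℝ)
    (w : TrtSeq p t → ℝ) : ℝ :=
  ∫ τ0, Phi (CInfo n S w τ0 l0) ∂g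

/-- Competing designs for a `Φ`-criterion. -/
def PhiAdmissible {p t : ℕ} (n : ℕ) (S : Matrix (Fin p) (Fin p) ℝ)
    (Phi : Matrix (Fin t) (Fin t) ℝ → ℝ) (g : Measure (Fin t → ℝ)) (l0 : ℝ)
    (w : TrtSeq p t → ℝ) : Prop :=
  IsDesign w ∧ (∀ᵐ τ0 ∂g, 0 < τ0 ⬝ᵥ (CD n S w 1 1 *ᵥ τ0)) ∧
    Integrable (fun τ0 => Phi (CInfo n S w τ0 l0)) g

/-- `d` is `Φ_{g,λ0}`-optimal. -/
def PhiOptimal {p t : ℕ} (n : ℕ) (S : Matrix (Fin p) (Fin p) ℝ)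
    (Phi : Matrix (Fin t) (Fin t) ℝ → ℝ) (g : Measure (Fin t → ℝ)) (l0 : ℝ)
    (w : TrtSeq p t → ℝ) : Prop :=
  ∀ w' : TrtSeq p t → ℝ, PhiAdmissible n S Phi g l0 w' →
    PhiCrit n S Phi g l0 w' ≤ PhiCrit n S Phi g l0 w

/-- `H_1(s) = F_s`, `H_2(s) = T_s + λ0 F_s` (for estimating `λ`). -/
def Hmat {p t : ℕ} (l0 : ℝ) (i : Fin 2) (s : TrtSeq p t) : Matrix (Fin p) (Fin t) ℝ :=
  if i = 0 then Fmat s else Tmat s + l0 • Fmat s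

/-- `Â_{sij} = B_t H_i(s)' B̃ H_j(s) B_t`. -/
def Ahat {p t : ℕ} (S : Matrix (Fin p) (Fin p) ℝ) (l0 : ℝ) (s : TrtSeq p t) (i j : Fin 2) :
    Matrix (Fin t) (Fin t) ℝ :=
  Bmat t * (Hmat l0 i s)ᵀ * Btil S * Hmat l0 j s * Bmat t

/-- `h_{sij} = tr Â_{sij}`. -/
def hseq {p t : ℕ} (S : Matrix (Fin p) (Fin p) ℝ) (l0 : ℝ) (s : TrtSeq p t) (i j : Fin 2) : ℝ :=
  (Ahat S l0 s i j).trace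

/-- `Â_{dij} = n ∑_s p_s Â_{sij}`. -/
def AhatD {p t : ℕ} (n : ℕ) (S : Matrix (Fin p) (Fin p) ℝ) (l0 : ℝ) (w : TrtSeq p t → ℝ)
    (i j : Fin 2) : Matrix (Fin t) (Fin t) ℝ :=
  (n : ℝ) • ∑ s : TrtSeq p t, w s • Ahat S l0 s i j

/-- `A_{dij} = Â_{dij} - n (∑_s p_s H_i(s) B_t)' B̃ (∑_s p_s H_j(s) B_t)`. -/
def AD {p t : ℕ} (n : ℕ) (S : Matrix (Fin p) (Fin p) ℝ) (l0 : ℝ) (w : TrtSeq p t → ℝ)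
    (i j : Fin 2) : Matrix (Fin t) (Fin t) ℝ :=
  AhatD n S l0 w i j -
    (n : ℝ) • ((∑ s : TrtSeq p t, w s • (Hmat l0 i s * Bmat t))ᵀ * Btil S *
      (∑ s : TrtSeq p t, w s • (Hmat l0 j s * Bmat t)))

/-- `G` is a generalized inverse of `A`. -/
def IsGInv {t : ℕ} (A G : Matrix (Fin t) (Fin t) ℝ) : Prop := A * G * A = A

/-- `A_d(G) = A_{d11} - A_{d12} G A_{d21}` with `A_{d21} = A_{d12}'`. -/
def ADfun {p t : ℕ} (n : ℕ) (S : Matrix (Fin p) (Fin p) ℝ) (l0 : ℝ) (w : TrtSeq p t → ℝ)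
    (G : Matrix (Fin t) (Fin t) ℝ) : Matrix (Fin t) (Fin t) ℝ :=
  AD n S l0 w 0 0 - AD n S l0 w 0 1 * G * (AD n S l0 w 0 1)ᵀ

/-- `r_s(x) = h_{s11} + 2 h_{s12} x + h_{s22} x²`. -/
def rSeq {p t : ℕ} (S : Matrix (Fin p) (Fin p) ℝ) (l0 : ℝ) (s : TrtSeq p t) (x : ℝ) : ℝ :=
  hseq S l0 s 0 0 + 2 * hseq S l0 s 0 1 * x + hseq S l0 s 1 1 * x ^ 2

/-- `r(x) = max_s r_s(x)`. -/
def rMax (p t : ℕ) (S : Matrix (Fin p) (Fin p) ℝ) (l0 : ℝ) (x : ℝ) : ℝ :=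
  sSup (Set.range fun s : TrtSeq p t => rSeq S l0 s x)

/-- `y_0 = inf_x r(x)`. -/
def yZero (p t : ℕ) (S : Matrix (Fin p) (Fin p) ℝ) (l0 : ℝ) : ℝ := ⨅ x : ℝ, rMax p t S l0 x

/-! The rank one correction in `C_{d,τ,λ0}` eliminates a scalar carryover parameter: `τ'C_{d,τ,λ0}τ`
is a Schur complement, so for every `x` it is at most the quadratic form at `τ` of
`Ĉ_{d11} + x (Ĉ_{d12} + Ĉ_{d21}) + x² Ĉ_{d22}`. Testing the minimum `m_d(τ)` against the contrast
`τ / ‖τ‖` and integrating, exchangeability makes `ττ'/τ'τ` average to `B_t / (t - 1)`, which leaves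
the trace `n q_d(x) / (t - 1) ≤ n q(x) / (t - 1)`; now take the infimum over `x`.

The bound is attained. By the minimax theorem some design satisfies `y* ≤ q_d(x)` for all `x`, and
averaging over relabellings makes it symmetric. For a symmetric design all `C_{dij}` are multiples
of `B_t`, the minimum `m_d(τ)` is attained at `τ / ‖τ‖` by Cauchy-Schwarz, and it equals
`n q_d(x_d) / (t - 1)` whatever `τ` and `λ0` are. -/

/-! ### A minimax theorem for finitely many coercive convex functions -/

lemma convexOn_sum_mul {ι E : Type*} [Fintype ι] [AddCommGroup E] [Module ℝ E] {s : Set E}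
    (hs : Convex ℝ s) {f : ι → E → ℝ} (hf : ∀ i, ConvexOn ℝ s (f i)) {w : ι → ℝ}
    (hw : ∀ i, 0 ≤ w i) : ConvexOn ℝ s fun x => ∑ i, w i * f i x := by
  have hsum : ConvexOn ℝ s (∑ i, fun x => w i * f i x) :=
    Finset.sum_induction _ (ConvexOn ℝ s) (fun _ _ => ConvexOn.add) (convexOn_const 0 hs)
      fun i _ => (hf i).smul (hw i)
  simpa only [Finset.sum_fn] using hsum

lemma exists_isSaddlePointOn_sum_mul {ι E : Type*} [Fintype ι] [Nonempty ι]
    [NormedAddCommGroup E] [NormedSpace ℝ E] {X : Set E} (hne : X.Nonempty) (hX : Convex ℝ X)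
    (hXc : IsCompact X) {f : ι → E → ℝ} (hf : ∀ i, ConvexOn ℝ X (f i))
    (hcont : ∀ i, ContinuousOn (f i) X) :
    ∃ x₀ ∈ X, ∃ w ∈ stdSimplex ℝ ι,
      IsSaddlePointOn X (stdSimplex ℝ ι) (fun x w => ∑ i, w i * f i x) x₀ w :=
  Sion.exists_isSaddlePointOn hne hX hXc
    (fun _ _ => (continuousOn_finsetSum _ fun i _ =>
      continuousOn_const.mul (hcont i)).lowerSemicontinuousOn)
    (fun _ hw => (convexOn_sum_mul hX hf hw.1).quasiconvexOn)
    (convex_stdSimplex ℝ ι) ⟨_, single_mem_stdSimplex ℝ (Classical.arbitrary ι)⟩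
    (isCompact_stdSimplex ℝ ι)
    (fun _ _ => Continuous.upperSemicontinuous (by fun_prop) |>.upperSemicontinuousOn _)
    (fun x _ => ((Fintype.linearCombination ℝ fun i => f i x).concaveOn
      (convex_stdSimplex ℝ ι)).quasiconcaveOn)

lemma exists_forall_le_sum_mul_of_convexOn {ι E : Type*} [Fintype ι] [Nonempty ι]
    [NormedAddCommGroup E] [NormedSpace ℝ E] [FiniteDimensional ℝ E] {f : ι → E → ℝ}
    (hf : ∀ i, ConvexOn ℝ Set.univ (f i))
    (hlim : ∀ i, Filter.Tendsto (f i) (Filter.cocompact E) Filter.atTop) :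
    ∃ x₀, ∃ w ∈ stdSimplex ℝ ι, ∀ i x, f i x₀ ≤ ∑ j, w j * f j x := by
  obtain ⟨C, hC⟩ : ∃ C, ∀ i, f i 0 ≤ C :=
    (Set.finite_range (f · 0)).bddAbove.imp fun C hC i => hC ⟨i, rfl⟩
  obtain ⟨R, hR⟩ : ∃ R, (Metric.closedBall (0 : E) R)ᶜ ⊆ {x | ∀ i, C ≤ f i x} :=
    Metric.closedBall_compl_subset_of_mem_cocompact
      (Filter.eventually_all.2 fun i => (hlim i).eventually_ge_atTop C) 0
  have hball : Convex ℝ (Metric.closedBall (0 : E) |R|) := convex_closedBall 0 |R|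
  have h0 : (0 : E) ∈ Metric.closedBall (0 : E) |R| := Metric.mem_closedBall_self (abs_nonneg R)
  obtain ⟨x₀, -, w, hw, hsaddle⟩ := exists_isSaddlePointOn_sum_mul ⟨0, h0⟩ hball
    (isCompact_closedBall 0 |R|) (fun i => (hf i).subset (Set.subset_univ _) hball)
    fun i => (hf i).locallyLipschitz.continuous.continuousOn
  have hin (i : ι) {x : E} (hx : x ∈ Metric.closedBall (0 : E) |R|) :
      f i x₀ ≤ ∑ j, w j * f j x := by
    simpa [Pi.single_apply] using hsaddle x hx _ (single_mem_stdSimplex ℝ i)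
  refine ⟨x₀, w, hw, fun i x => ?_⟩
  by_cases hx : x ∈ Metric.closedBall (0 : E) |R|
  · exact hin i hx
  · have hCx : ∀ j, C ≤ f j x :=
      hR (mt (fun h => Metric.closedBall_subset_closedBall (le_abs_self R) h) hx)
    calc f i x₀ ≤ ∑ j, w j * f j 0 := hin i h0
      _ ≤ ∑ j, w j * f j x :=
        Finset.sum_le_sum fun j _ => mul_le_mul_of_nonneg_left ((hC j).trans (hCx j)) (hw.1 j)

lemma convexOn_quadratic {a b c : ℝ} (hc : 0 ≤ c) :
    ConvexOn ℝ Set.univ fun x : ℝ => a + b * x + c * x ^ 2 :=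
  ((convexOn_const a convex_univ).add ((LinearMap.mul ℝ ℝ b).convexOn convex_univ)).add
    (even_two.convexOn_pow.smul hc)

lemma tendsto_quadratic_cocompact_atTop {a b c : ℝ} (hc : 0 < c) :
    Filter.Tendsto (fun x : ℝ => a + b * x + c * x ^ 2) (Filter.cocompact ℝ) Filter.atTop := by
  have hlim : Filter.Tendsto (fun u : ℝ => a + u * (c * u - |b|)) Filter.atTop Filter.atTop :=
    Filter.tendsto_atTop_add_const_left _ a (Filter.tendsto_id.atTop_mul_atTop₀
      (Filter.tendsto_atTop_add_const_right _ (-|b|) (Filter.tendsto_id.const_mul_atTop hc)))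
  refine Filter.tendsto_atTop_mono (fun x => ?_) (hlim.comp tendsto_norm_cocompact_atTop)
  have hb : -(|b| * |x|) ≤ b * x := abs_mul b x ▸ neg_abs_le _
  simp only [Function.comp_apply, Real.norm_eq_abs]
  calc a + |x| * (c * |x| - |b|) = a + -(|b| * |x|) + c * |x| ^ 2 := by ring
    _ ≤ a + b * x + c * x ^ 2 := by rw [sq_abs]; gcongr

/-! ### Quadratic forms -/

section QuadraticForms

variable {m : Type*} [Fintype m]

lemma dotProduct_mul_vecMulVec_mul_mulVec (X Y : Matrix m m ℝ) (u v l l' : m → ℝ) :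
    l ⬝ᵥ ((X * vecMulVec u v * Y) *ᵥ l') = (l ⬝ᵥ (X *ᵥ u)) * (v ⬝ᵥ (Y *ᵥ l')) := by
  rw [Matrix.mul_assoc, ← mulVec_mulVec, ← mulVec_mulVec, vecMulVec_mulVec]
  simp only [op_smul_eq_smul, mulVec_smul, dotProduct_smul, smul_eq_mul, mul_comm]

lemma dotProduct_self_pos {v : m → ℝ} (hv : v ≠ 0) : 0 < v ⬝ᵥ v := by
  simpa only [star_trivial] using dotProduct_star_self_pos_iff.2 hv

lemma sq_dotProduct_le (u v : m → ℝ) : (u ⬝ᵥ v) ^ 2 ≤ (u ⬝ᵥ u) * (v ⬝ᵥ v) := by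
  simpa only [dotProduct, ← sq] using Finset.sum_mul_sq_le_sq_mul_sq Finset.univ u v

lemma sq_apply_le_dotProduct_self (v : m → ℝ) (i : m) : v i ^ 2 ≤ v ⬝ᵥ v := by
  rw [sq]
  exact Finset.single_le_sum (f := fun i => v i * v i) (fun j _ => mul_self_nonneg _)
    (Finset.mem_univ i)

lemma isCompact_dotProduct_self_eq_one : IsCompact {v : m → ℝ | v ⬝ᵥ v = 1} := by
  refine (isCompact_univ_pi fun _ => isCompact_Icc (a := (-1 : ℝ)) (b := 1)).of_isClosed_subset
    (isClosed_eq (by fun_prop) continuous_const) fun v hv i _ => ?_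
  exact abs_le.1 (abs_le_one_iff_mul_self_le_one.2 (by
    rw [← sq, ← show v ⬝ᵥ v = 1 from hv]; exact sq_apply_le_dotProduct_self v i))

lemma dotProduct_mulVec_smul_smul (M : Matrix m m ℝ) (r : ℝ) (v : m → ℝ) :
    (r • v) ⬝ᵥ (M *ᵥ (r • v)) = r ^ 2 * (v ⬝ᵥ (M *ᵥ v)) := by
  rw [mulVec_smul, smul_dotProduct, dotProduct_smul, smul_eq_mul, smul_eq_mul, ← mul_assoc, sq]

end QuadraticForms

/-! ### Permutation invariance and the centering matrix -/

lemma eq_zero_of_perm_invariant {ι : Type*} [Fintype ι] {v : ι → ℝ}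
    (hv : ∀ (σ : Equiv.Perm ι) i, v (σ i) = v i) (hsum : ∑ i, v i = 0) : v = 0 := by
  ext i
  have hconst (j : ι) : v j = v i := by simpa using hv (Equiv.swap i j) i
  have : Nonempty ι := ⟨i⟩
  simpa [Finset.sum_congr rfl fun j _ => hconst j] using hsum

lemma Bmat_apply {t : ℕ} (a b : Fin t) : Bmat t a b = (if a = b then 1 else 0) - (t : ℝ)⁻¹ := by
  simp [Bmat, Jmat, Matrix.one_apply]

lemma natCast_sub_one_smul_eq_trace_smul_Bmat {t : ℕ} {M : Matrix (Fin t) (Fin t) ℝ}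
    (hM : ∀ σ : Equiv.Perm (Fin t), M.submatrix σ σ = M) (hM1 : M *ᵥ 1 = 0) :
    ((t : ℝ) - 1) • M = M.trace • Bmat t := by
  have hinv (σ : Equiv.Perm (Fin t)) (a b) : M (σ a) (σ b) = M a b := congrFun₂ (hM σ) a b
  have hdiag (a b) : M a a = M b b := by simpa using (hinv (Equiv.swap a b) a a).symm
  have htr (a) : M.trace = t * M a a := by
    simp [Matrix.trace, Finset.sum_congr rfl fun b _ => hdiag b a]
  have hoff {a b c} (hb : b ≠ a) (hc : c ≠ a) : M a c = M a b := by
    simpa [Equiv.swap_apply_of_ne_of_ne hb.symm hc.symm] using hinv (Equiv.swap b c) a b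
  have hrow {a b} (hb : b ≠ a) : M a a + ((t : ℝ) - 1) * M a b = 0 := by
    have hsum : ∑ c, M a c = 0 := by simpa [mulVec, dotProduct] using congrFun hM1 a
    rw [← Finset.add_sum_erase _ _ (Finset.mem_univ a), Finset.sum_congr rfl fun c hc =>
      hoff hb (Finset.ne_of_mem_erase hc)] at hsum
    simpa [Nat.cast_sub (Fin.pos a)] using hsum
  ext a b
  have ht : (t : ℝ) ≠ 0 := Nat.cast_ne_zero.2 (Fin.pos a).ne'
  by_cases hab : a = b
  · subst hab
    simp only [Matrix.smul_apply, Bmat_apply, htr a, if_true, smul_eq_mul]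
    field_simp
  · simp only [Matrix.smul_apply, Bmat_apply, htr a, if_neg hab, smul_eq_mul]
    field_simp
    linarith only [hrow (Ne.symm hab)]

lemma Jmat_mulVec {t : ℕ} (v : Fin t → ℝ) : Jmat t *ᵥ v = (∑ i, v i) • 1 := by
  ext
  simp [Jmat, mulVec, dotProduct]

lemma Jmat_transpose (t : ℕ) : (Jmat t)ᵀ = Jmat t := rfl

lemma Bmat_transpose (t : ℕ) : (Bmat t)ᵀ = Bmat t := by
  simp only [Bmat, transpose_sub, transpose_one, transpose_smul, Jmat_transpose]

lemma Bmat_mulVec_one (t : ℕ) : Bmat t *ᵥ 1 = 0 := by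
  rcases t.eq_zero_or_pos with rfl | ht
  · exact Subsingleton.elim _ _
  · simp [Bmat, sub_mulVec, smul_mulVec, Jmat_mulVec, ht.ne']

lemma Bmat_mulVec {t : ℕ} {v : Fin t → ℝ} (hv : ∑ i, v i = 0) : Bmat t *ᵥ v = v := by
  simp [Bmat, sub_mulVec, smul_mulVec, Jmat_mulVec, hv]

lemma mul_Bmat {t : ℕ} {m : Type*} {M : Matrix m (Fin t) ℝ} (hM : M *ᵥ 1 = 0) :
    M * Bmat t = M := by
  have hJ : M * Jmat t = 0 := by
    ext i j
    simpa [Jmat, mul_apply, mulVec, dotProduct] using congrFun hM i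
  rw [Bmat, Matrix.mul_sub, Matrix.mul_one, Matrix.mul_smul, hJ, smul_zero, sub_zero]

lemma Bmat_submatrix {t : ℕ} (σ : Equiv.Perm (Fin t)) : (Bmat t).submatrix σ σ = Bmat t := by
  ext a b
  simp only [submatrix_apply, Bmat_apply, σ.injective.eq_iff]

/-! ### The matrix `B̃` -/

section Btil

variable {p : ℕ} {S : Matrix (Fin p) (Fin p) ℝ}

lemma Btil_transpose (hS : S.PosDef) : (Btil S)ᵀ = Btil S := by
  have hSt : (S⁻¹)ᵀ = S⁻¹ := hS.inv.isHermitian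
  simp only [Btil, transpose_sub, transpose_smul, transpose_mul, hSt, Jmat_transpose,
    Matrix.mul_assoc]

lemma exists_dotProduct_Btil_mulVec_eq (hS : S.PosDef) (v : Fin p → ℝ) :
    ∃ c : ℝ, v ⬝ᵥ (Btil S *ᵥ v) = (v - c • 1) ⬝ᵥ (S⁻¹ *ᵥ (v - c • 1)) := by
  rcases p.eq_zero_or_pos with rfl | hp
  · exact ⟨0, by simp only [dotProduct, Finset.univ_eq_empty, Finset.sum_empty]⟩
  have hone : (1 : Fin p → ℝ) ⬝ᵥ (S⁻¹ *ᵥ 1) ≠ 0 := by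
    have : Nonempty (Fin p) := ⟨⟨0, hp⟩⟩
    simpa only [star_trivial] using (hS.inv.dotProduct_mulVec_pos one_ne_zero).ne'
  have hsymm : v ⬝ᵥ (S⁻¹ *ᵥ 1) = 1 ⬝ᵥ (S⁻¹ *ᵥ v) := by
    rw [← dotProduct_transpose_mulVec, show (S⁻¹)ᵀ = S⁻¹ from hS.inv.isHermitian]
  have hBtil : Btil S *ᵥ v =
      S⁻¹ *ᵥ v - ((1 ⬝ᵥ (S⁻¹ *ᵥ 1))⁻¹ * (1 ⬝ᵥ (S⁻¹ *ᵥ v))) • (S⁻¹ *ᵥ 1) := by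
    rw [Btil, sub_mulVec, smul_mulVec, ← mulVec_mulVec, ← mulVec_mulVec, Jmat_mulVec, mulVec_smul,
      ← one_dotProduct, smul_smul]
    rfl
  refine ⟨(1 ⬝ᵥ (S⁻¹ *ᵥ v)) / (1 ⬝ᵥ (S⁻¹ *ᵥ 1)), ?_⟩
  simp only [hBtil, mulVec_sub, mulVec_smul, dotProduct_sub, sub_dotProduct, dotProduct_smul,
    smul_dotProduct, smul_eq_mul, hsymm]
  field_simp
  ring

lemma Btil_posSemidef (hS : S.PosDef) : (Btil S).PosSemidef := by
  refine .of_dotProduct_mulVec_nonneg (Btil_transpose hS) fun v => ?_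
  obtain ⟨c, hc⟩ := exists_dotProduct_Btil_mulVec_eq hS v
  rw [star_trivial, hc]
  simpa only [star_trivial] using hS.inv.posSemidef.dotProduct_mulVec_nonneg (v - c • 1)

lemma dotProduct_Btil_mulVec_pos (hS : S.PosDef) {v : Fin p → ℝ} {i j : Fin p}
    (hv : v i ≠ v j) : 0 < v ⬝ᵥ (Btil S *ᵥ v) := by
  obtain ⟨c, hc⟩ := exists_dotProduct_Btil_mulVec_eq hS v
  have hne : v - c • 1 ≠ 0 := by
    intro h
    have hconst (k) : v k = c := by simpa [sub_eq_zero] using congrFun h k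
    exact hv ((hconst i).trans (hconst j).symm)
  rw [hc]
  simpa only [star_trivial] using hS.inv.dotProduct_mulVec_pos hne

end Btil

/-! ### Information matrices of a single sequence -/

section Sequence

variable {p t : ℕ} {S : Matrix (Fin p) (Fin p) ℝ}

lemma Gmat_mul_Bmat_mulVec_one (i : Fin 2) (s : TrtSeq p t) : (Gmat i s * Bmat t) *ᵥ 1 = 0 := by
  rw [← mulVec_mulVec, Bmat_mulVec_one, mulVec_zero]

lemma Chat_eq (S : Matrix (Fin p) (Fin p) ℝ) (s : TrtSeq p t) (i j : Fin 2) :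
    Chat S s i j = (Gmat i s * Bmat t)ᵀ * Btil S * (Gmat j s * Bmat t) := by
  simp only [Chat, transpose_mul, Bmat_transpose, Matrix.mul_assoc]

lemma Chat_mulVec_one (S : Matrix (Fin p) (Fin p) ℝ) (s : TrtSeq p t) (i j : Fin 2) :
    Chat S s i j *ᵥ 1 = 0 := by
  rw [Chat_eq, ← mulVec_mulVec, Gmat_mul_Bmat_mulVec_one, mulVec_zero]

lemma Chat_transpose (hS : S.PosDef) (s : TrtSeq p t) (i j : Fin 2) :
    (Chat S s i j)ᵀ = Chat S s j i := by
  simp only [Chat_eq, transpose_mul, transpose_transpose, Btil_transpose hS, Matrix.mul_assoc]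

lemma cseq_comm (hS : S.PosDef) (s : TrtSeq p t) (i j : Fin 2) :
    cseq S s i j = cseq S s j i := by
  rw [cseq, ← trace_transpose, Chat_transpose hS, cseq]

lemma cseq_one_one_pos (hp : 2 ≤ p) (ht : 2 ≤ t) (hS : S.PosDef) (s : TrtSeq p t) :
    0 < cseq S s 1 1 := by
  set F : Matrix (Fin p) (Fin t) ℝ := Gmat 1 s * Bmat t with hF
  have hC : Chat S s 1 1 = Fᵀ * Btil S * F := Chat_eq S s 1 1
  have hdiag (a) : Chat S s 1 1 a a = F.col a ⬝ᵥ (Btil S *ᵥ F.col a) := by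
    rw [hC, Matrix.mul_assoc]
    rfl
  have hne : F.col (s ⟨0, by lia⟩) ⟨1, by lia⟩ ≠ F.col (s ⟨0, by lia⟩) ⟨0, by lia⟩ := by
    have ht' : (t : ℝ)⁻¹ < 1 := inv_lt_one_of_one_lt₀ (by exact_mod_cast ht)
    simpa [hF, Gmat, Fmat, mul_apply, Bmat_apply, sub_eq_zero] using ht'.ne'
  have hpsd : (Chat S s 1 1).PosSemidef := hC ▸ (Btil_posSemidef hS).conjTranspose_mul_mul_same F
  change 0 < ∑ a, Chat S s 1 1 a a
  exact Finset.sum_pos' (fun a _ => hpsd.diag_nonneg)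
    ⟨s ⟨0, by lia⟩, Finset.mem_univ _, (dotProduct_Btil_mulVec_pos hS hne).trans_eq (hdiag _).symm⟩

lemma Gmat_permSeq (σ : Equiv.Perm (Fin t)) (s : TrtSeq p t) (i : Fin 2) :
    (Gmat i (permSeq σ s)).submatrix id σ = Gmat i s := by
  ext k a
  unfold Gmat
  split_ifs <;> simp [Tmat, Fmat, permSeq]

lemma Gmat_mul_Bmat_permSeq (σ : Equiv.Perm (Fin t)) (s : TrtSeq p t) (i : Fin 2) :
    (Gmat i (permSeq σ s) * Bmat t).submatrix id σ = Gmat i s * Bmat t := by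
  rw [← submatrix_mul_equiv _ _ id σ σ, Gmat_permSeq, Bmat_submatrix]

lemma Chat_permSeq (S : Matrix (Fin p) (Fin p) ℝ) (σ : Equiv.Perm (Fin t)) (s : TrtSeq p t)
    (i j : Fin 2) : (Chat S (permSeq σ s) i j).submatrix σ σ = Chat S s i j := by
  rw [Chat_eq, Chat_eq, ← Gmat_mul_Bmat_permSeq σ s i, ← Gmat_mul_Bmat_permSeq σ s j]
  rfl

lemma cseq_permSeq (S : Matrix (Fin p) (Fin p) ℝ) (σ : Equiv.Perm (Fin t)) (s : TrtSeq p t)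
    (i j : Fin 2) : cseq S (permSeq σ s) i j = cseq S s i j := by
  rw [cseq, cseq, ← Chat_permSeq S σ s i j]
  exact (Equiv.sum_comp σ fun a => Chat S (permSeq σ s) i j a a).symm

lemma qSeq_permSeq (S : Matrix (Fin p) (Fin p) ℝ) (σ : Equiv.Perm (Fin t)) (s : TrtSeq p t)
    (x : ℝ) : qSeq S (permSeq σ s) x = qSeq S s x := by
  simp only [qSeq, cseq_permSeq]

end Sequence

/-! ### Information matrices of a design -/

/-- The quadratic `C₁₁ + x (C₁₂ + C₂₁) + x² C₂₂` attached to a `2 × 2` array `C`, indexed from `0`.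
It is applied to the matrices `C_{dij}` and `Ĉ_{dij}` and to the scalars `c_{dij}`. -/
def quadPencil {M : Type*} [AddCommMonoid M] [Module ℝ M] (C : Fin 2 → Fin 2 → M) (x : ℝ) : M :=
  C 0 0 + x • (C 0 1 + C 1 0) + x ^ 2 • C 1 1

/-- The average `∑_s p_s G_i(s) B_t` of the centred incidence matrices over a design; the second
term of `C_{dij}` is built from it. -/
def meanIncidence {p t : ℕ} (w : TrtSeq p t → ℝ) (i : Fin 2) : Matrix (Fin p) (Fin t) ℝ :=
  ∑ s : TrtSeq p t, w s • (Gmat i s * Bmat t)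

section Design

variable {p t n : ℕ} {S : Matrix (Fin p) (Fin p) ℝ} {w : TrtSeq p t → ℝ}

lemma meanIncidence_mulVec_one (w : TrtSeq p t → ℝ) (i : Fin 2) :
    meanIncidence w i *ᵥ 1 = 0 := by
  simp only [meanIncidence, sum_mulVec, smul_mulVec, Gmat_mul_Bmat_mulVec_one, smul_zero,
    Finset.sum_const_zero]

lemma ChatD_mulVec_one (n : ℕ) (S : Matrix (Fin p) (Fin p) ℝ) (w : TrtSeq p t → ℝ)
    (i j : Fin 2) : ChatD n S w i j *ᵥ 1 = 0 := by
  simp only [ChatD, smul_mulVec, sum_mulVec, Chat_mulVec_one, smul_zero, Finset.sum_const_zero]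

lemma ChatD_transpose (hS : S.PosDef) (i j : Fin 2) :
    (ChatD n S w i j)ᵀ = ChatD n S w j i := by
  simp only [ChatD, transpose_smul, transpose_sum, Chat_transpose hS]

lemma CD_eq (n : ℕ) (S : Matrix (Fin p) (Fin p) ℝ) (w : TrtSeq p t → ℝ) (i j : Fin 2) :
    CD n S w i j =
      ChatD n S w i j - (n : ℝ) • ((meanIncidence w i)ᵀ * Btil S * meanIncidence w j) :=
  rfl

lemma CD_transpose (hS : S.PosDef) (i j : Fin 2) : (CD n S w i j)ᵀ = CD n S w j i := by
  simp only [CD_eq, transpose_sub, transpose_smul, ChatD_transpose hS, transpose_mul,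
    transpose_transpose, Btil_transpose hS, Matrix.mul_assoc]

lemma CInfo_eq (n : ℕ) (S : Matrix (Fin p) (Fin p) ℝ) (w : TrtSeq p t → ℝ) (τ : Fin t → ℝ)
    (l0 : ℝ) : CInfo n S w τ l0 = quadPencil (CD n S w) l0 - (τ ⬝ᵥ (CD n S w 1 1 *ᵥ τ))⁻¹ •
      ((CD n S w 0 1 + l0 • CD n S w 1 1) * vecMulVec τ τ *
        (CD n S w 1 0 + l0 • CD n S w 1 1)) :=
  rfl

lemma quadPencil_CD (n : ℕ) (S : Matrix (Fin p) (Fin p) ℝ) (w : TrtSeq p t → ℝ) (x : ℝ) :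
    quadPencil (CD n S w) x = quadPencil (ChatD n S w) x -
      (n : ℝ) • ((meanIncidence w 0 + x • meanIncidence w 1)ᵀ * Btil S *
        (meanIncidence w 0 + x • meanIncidence w 1)) := by
  simp only [quadPencil, CD_eq, transpose_add, transpose_smul, Matrix.add_mul, Matrix.mul_add,
    Matrix.smul_mul, Matrix.mul_smul]
  module

lemma dotProduct_quadPencil_CD_mulVec_le (hS : S.PosDef) (x : ℝ) (τ : Fin t → ℝ) :
    τ ⬝ᵥ (quadPencil (CD n S w) x *ᵥ τ) ≤ τ ⬝ᵥ (quadPencil (ChatD n S w) x *ᵥ τ) := by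
  set N := meanIncidence w 0 + x • meanIncidence w 1 with hN
  have hpsd : (Nᵀ * Btil S * N).PosSemidef := (Btil_posSemidef hS).conjTranspose_mul_mul_same N
  rw [quadPencil_CD, ← hN, sub_mulVec, dotProduct_sub, smul_mulVec, dotProduct_smul]
  exact sub_le_self _ (mul_nonneg n.cast_nonneg
    (by simpa only [star_trivial] using hpsd.dotProduct_mulVec_nonneg τ))

lemma dotProduct_CInfo_mulVec_self (hS : S.PosDef) {τ : Fin t → ℝ}
    (hτ : τ ⬝ᵥ (CD n S w 1 1 *ᵥ τ) ≠ 0) (l0 x : ℝ) :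
    τ ⬝ᵥ (CInfo n S w τ l0 *ᵥ τ) = τ ⬝ᵥ (quadPencil (CD n S w) x *ᵥ τ) -
      (τ ⬝ᵥ (CD n S w 0 1 *ᵥ τ) + x * τ ⬝ᵥ (CD n S w 1 1 *ᵥ τ)) ^ 2 /
        τ ⬝ᵥ (CD n S w 1 1 *ᵥ τ) := by
  have hsymm : τ ⬝ᵥ (CD n S w 1 0 *ᵥ τ) = τ ⬝ᵥ (CD n S w 0 1 *ᵥ τ) := by
    rw [← CD_transpose hS, dotProduct_transpose_mulVec]
  simp only [CInfo_eq, quadPencil, add_mulVec, sub_mulVec, smul_mulVec, dotProduct_add,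
    dotProduct_sub, dotProduct_smul, smul_eq_mul, dotProduct_mul_vecMulVec_mul_mulVec, hsymm]
  field_simp
  ring

lemma dotProduct_CInfo_mulVec_self_le (hS : S.PosDef) {τ : Fin t → ℝ}
    (hτ : 0 < τ ⬝ᵥ (CD n S w 1 1 *ᵥ τ)) (l0 x : ℝ) :
    τ ⬝ᵥ (CInfo n S w τ l0 *ᵥ τ) ≤ τ ⬝ᵥ (quadPencil (ChatD n S w) x *ᵥ τ) := by
  rw [dotProduct_CInfo_mulVec_self hS hτ.ne' l0 x]
  have hquad := dotProduct_quadPencil_CD_mulVec_le (n := n) (w := w) hS x τ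
  have hsq := div_nonneg (sq_nonneg (τ ⬝ᵥ (CD n S w 0 1 *ᵥ τ) + x * τ ⬝ᵥ (CD n S w 1 1 *ᵥ τ))) hτ.le
  linarith only [hquad, hsq]

lemma cD_eq (n : ℕ) (S : Matrix (Fin p) (Fin p) ℝ) (w : TrtSeq p t → ℝ) (i j : Fin 2) :
    cD n S w i j = n * ∑ s, w s * cseq S s i j := by
  simp only [cD, ChatD, cseq, trace_smul, trace_sum, smul_eq_mul]

lemma quadPencil_ChatD_mulVec_one (n : ℕ) (S : Matrix (Fin p) (Fin p) ℝ) (w : TrtSeq p t → ℝ)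
    (x : ℝ) : quadPencil (ChatD n S w) x *ᵥ 1 = 0 := by
  simp only [quadPencil, add_mulVec, smul_mulVec, ChatD_mulVec_one, smul_zero, add_zero]

lemma trace_quadPencil_ChatD (n : ℕ) (S : Matrix (Fin p) (Fin p) ℝ) (w : TrtSeq p t → ℝ)
    (x : ℝ) : (quadPencil (ChatD n S w) x).trace = quadPencil (cD n S w) x := by
  simp only [quadPencil, trace_add, trace_smul, cD]

lemma quadPencil_cD (hS : S.PosDef) (x : ℝ) : quadPencil (cD n S w) x = n * qD S w x := by
  simp only [quadPencil, cD_eq, qD, qSeq, smul_eq_mul, cseq_comm hS _ 1 0, mul_add, Finset.mul_sum,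
    ← Finset.sum_add_distrib]
  exact Finset.sum_congr rfl fun s _ => by ring

lemma cD_comm (hS : S.PosDef) (i j : Fin 2) : cD n S w i j = cD n S w j i := by
  simp only [cD_eq, cseq_comm hS _ i j]

lemma quadPencil_cD_eq_add_sq_div (hS : S.PosDef) (hc : cD n S w 1 1 ≠ 0) (x : ℝ) :
    quadPencil (cD n S w) x =
      n * qD S w (xD n S w) + (cD n S w 0 1 + x * cD n S w 1 1) ^ 2 / cD n S w 1 1 := by
  simp only [← quadPencil_cD hS, xD, quadPencil, smul_eq_mul, cD_comm hS 1 0]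
  field_simp
  ring

lemma cD_one_one_pos (hn : 0 < n) (hp : 2 ≤ p) (ht : 2 ≤ t) (hS : S.PosDef) (hw : IsDesign w) :
    0 < cD n S w 1 1 := by
  obtain ⟨s, -, hs⟩ : ∃ s ∈ Finset.univ, w s ≠ 0 :=
    Finset.exists_ne_zero_of_sum_ne_zero (hw.2 ▸ one_ne_zero)
  have hc := cseq_one_one_pos (S := S) hp ht hS
  rw [cD_eq]
  exact mul_pos (Nat.cast_pos.2 hn) (Finset.sum_pos' (fun s _ => mul_nonneg (hw.1 s) (hc s).le)
    ⟨s, Finset.mem_univ s, mul_pos ((hw.1 s).lt_of_ne' hs) (hc s)⟩)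

end Design

/-! ### The least value on unit contrasts -/

/-- The minimum of the quadratic form `ℓ' M ℓ` over unit contrasts `ℓ`, i.e. `1'ℓ = 0` and
`ℓ'ℓ = 1`; for symmetric `M` with zero row sums it is the criterion of E-optimality. It is an
infimum over the empty set, hence `0`, if `t ≤ 1`. -/
def contrastMin {t : ℕ} (M : Matrix (Fin t) (Fin t) ℝ) : ℝ :=
  sInf {v | ∃ l : Fin t → ℝ, ∑ i, l i = 0 ∧ l ⬝ᵥ l = 1 ∧ v = l ⬝ᵥ (M *ᵥ l)}

section ContrastMin

variable {t : ℕ} {M : Matrix (Fin t) (Fin t) ℝ} {τ : Fin t → ℝ}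

lemma exists_unit_contrast (hτ : ∑ i, τ i = 0) (hτ0 : τ ≠ 0) (M : Matrix (Fin t) (Fin t) ℝ) :
    ∃ l : Fin t → ℝ, ∑ i, l i = 0 ∧ l ⬝ᵥ l = 1 ∧
      τ ⬝ᵥ (M *ᵥ τ) / (τ ⬝ᵥ τ) = l ⬝ᵥ (M *ᵥ l) := by
  have hpos : 0 < τ ⬝ᵥ τ := dotProduct_self_pos hτ0
  have hsq : ((√(τ ⬝ᵥ τ))⁻¹) ^ 2 = (τ ⬝ᵥ τ)⁻¹ := by rw [inv_pow, Real.sq_sqrt hpos.le]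
  refine ⟨(√(τ ⬝ᵥ τ))⁻¹ • τ, ?_, ?_, ?_⟩
  · simp only [Pi.smul_apply, ← Finset.smul_sum, hτ, smul_zero]
  · rw [smul_dotProduct, dotProduct_smul, smul_smul, ← sq, hsq, smul_eq_mul,
      inv_mul_cancel₀ hpos.ne']
  · rw [dotProduct_mulVec_smul_smul, hsq, div_eq_inv_mul]

lemma contrastMin_le_div (M : Matrix (Fin t) (Fin t) ℝ) (hτ : ∑ i, τ i = 0) (hτ0 : τ ≠ 0) :
    contrastMin M ≤ τ ⬝ᵥ (M *ᵥ τ) / (τ ⬝ᵥ τ) := by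
  have hcont : Continuous fun l : Fin t → ℝ => l ⬝ᵥ (M *ᵥ l) := by fun_prop
  obtain ⟨b, hb⟩ := isCompact_dotProduct_self_eq_one.bddBelow_image hcont.continuousOn
  refine csInf_le ⟨b, ?_⟩ (exists_unit_contrast hτ hτ0 M)
  rintro _ ⟨l, -, hl, rfl⟩
  exact hb ⟨l, hl, rfl⟩

lemma contrastMin_eq_div (hτ : ∑ i, τ i = 0) (hτ0 : τ ≠ 0)
    (hmin : ∀ l : Fin t → ℝ, ∑ i, l i = 0 →
      τ ⬝ᵥ (M *ᵥ τ) / (τ ⬝ᵥ τ) * (l ⬝ᵥ l) ≤ l ⬝ᵥ (M *ᵥ l)) :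
    contrastMin M = τ ⬝ᵥ (M *ᵥ τ) / (τ ⬝ᵥ τ) := by
  refine (contrastMin_le_div M hτ hτ0).antisymm
    (le_csInf ⟨_, exists_unit_contrast hτ hτ0 M⟩ ?_)
  rintro _ ⟨l, hl, hl1, rfl⟩
  simpa only [hl1, mul_one] using hmin l hl

end ContrastMin

lemma mD_eq_contrastMin {p t : ℕ} (n : ℕ) (S : Matrix (Fin p) (Fin p) ℝ) (w : TrtSeq p t → ℝ)
    (l0 : ℝ) (τ : Fin t → ℝ) : mD n S w l0 τ = contrastMin (CInfo n S w τ l0) :=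
  rfl

/-! ### Exchangeable priors -/

/-- The second moment matrix `∫ τ τ' / (τ'τ) g(dτ)` of the direction of a random vector with law
`g`. -/
def directionMoment {t : ℕ} (g : Measure (Fin t → ℝ)) : Matrix (Fin t) (Fin t) ℝ :=
  of fun i j => ∫ τ, τ i * τ j / (τ ⬝ᵥ τ) ∂g

lemma two_le_of_sum_eq_zero {t : ℕ} {τ : Fin t → ℝ} (hτ : ∑ i, τ i = 0) (hτ0 : τ ≠ 0) :
    2 ≤ t := by
  by_contra! ht
  have : Subsingleton (Fin t) := Fin.subsingleton_iff_le_one.2 (by lia)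
  refine hτ0 (funext fun i => ?_)
  rwa [Fintype.sum_subsingleton _ i] at hτ

lemma abs_apply_mul_apply_div_le_one {m : Type*} [Fintype m] (v : m → ℝ) (i j : m) :
    |v i * v j / (v ⬝ᵥ v)| ≤ 1 := by
  have hle (k) : |v k| ≤ √(v ⬝ᵥ v) := Real.abs_le_sqrt (sq_apply_le_dotProduct_self v k)
  have hnn : 0 ≤ v ⬝ᵥ v := (sq_nonneg (v i)).trans (sq_apply_le_dotProduct_self v i)
  rw [abs_div, abs_mul, abs_of_nonneg hnn]
  exact div_le_one_of_le₀ ((mul_le_mul (hle i) (hle j) (abs_nonneg _) (Real.sqrt_nonneg _)).trans_eq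
    (Real.mul_self_sqrt hnn)) hnn

lemma measurable_apply_mul_apply_div {m : Type*} [Fintype m] (i j : m) :
    Measurable fun v : m → ℝ => v i * v j / (v ⬝ᵥ v) := by
  unfold dotProduct
  fun_prop

lemma integrable_apply_mul_apply_div {m : Type*} [Fintype m] (g : Measure (m → ℝ))
    [IsFiniteMeasure g] (i j : m) : Integrable (fun v : m → ℝ => v i * v j / (v ⬝ᵥ v)) g :=
  .of_bound (measurable_apply_mul_apply_div i j).aestronglyMeasurable 1
    (.of_forall fun v => abs_apply_mul_apply_div_le_one v i j)

namespace IsExchangeablePrior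

variable {t : ℕ} {g : Measure (Fin t → ℝ)}

lemma ae_contrast (hg : IsExchangeablePrior g) : ∀ᵐ τ ∂g, ∑ i, τ i = 0 ∧ τ ≠ 0 :=
  ae_iff.2 hg.2.1

lemma two_le (hg : IsExchangeablePrior g) : 2 ≤ t := by
  have := hg.1
  obtain ⟨τ, hτ, hτ0⟩ := hg.ae_contrast.exists
  exact two_le_of_sum_eq_zero hτ hτ0

lemma directionMoment_submatrix (hg : IsExchangeablePrior g) (σ : Equiv.Perm (Fin t)) :
    (directionMoment g).submatrix σ σ = directionMoment g := by
  have hσ : Measurable fun (τ : Fin t → ℝ) i => τ (σ i) := by fun_prop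
  have hdot (τ : Fin t → ℝ) : (fun i => τ (σ i)) ⬝ᵥ (fun i => τ (σ i)) = τ ⬝ᵥ τ :=
    Equiv.sum_comp σ fun i => τ i * τ i
  ext i j
  calc ∫ τ, τ (σ i) * τ (σ j) / (τ ⬝ᵥ τ) ∂g
      = ∫ τ, τ i * τ j / (τ ⬝ᵥ τ) ∂Measure.map (fun τ i => τ (σ i)) g := by
        rw [integral_map hσ.aemeasurable
          (measurable_apply_mul_apply_div i j).aestronglyMeasurable]
        simp only [hdot]
    _ = ∫ τ, τ i * τ j / (τ ⬝ᵥ τ) ∂g := by rw [hg.2.2 σ]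

lemma directionMoment_mulVec_one (hg : IsExchangeablePrior g) : directionMoment g *ᵥ 1 = 0 := by
  have := hg.1
  ext i
  calc (directionMoment g *ᵥ 1) i
      = ∑ j, ∫ τ, τ i * τ j / (τ ⬝ᵥ τ) ∂g := dotProduct_one _
    _ = ∫ τ, ∑ j, τ i * τ j / (τ ⬝ᵥ τ) ∂g :=
      (integral_finsetSum _ fun j _ => integrable_apply_mul_apply_div g i j).symm
    _ = ∫ _, 0 ∂g := integral_congr_ae <| hg.ae_contrast.mono fun τ hτ => by
      simp only [← Finset.sum_div, ← Finset.mul_sum, hτ.1, mul_zero, zero_div]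
    _ = 0 := integral_zero _ _

lemma trace_directionMoment (hg : IsExchangeablePrior g) : (directionMoment g).trace = 1 := by
  have := hg.1
  calc (directionMoment g).trace
      = ∫ τ, ∑ i, τ i * τ i / (τ ⬝ᵥ τ) ∂g :=
      (integral_finsetSum _ fun i _ => integrable_apply_mul_apply_div g i i).symm
    _ = ∫ _, 1 ∂g := integral_congr_ae <| hg.ae_contrast.mono fun τ hτ =>
      (Finset.sum_div _ _ _).symm.trans (div_self (dotProduct_self_pos hτ.2).ne')
    _ = 1 := by rw [integral_const, probReal_univ, one_smul]

lemma directionMoment_eq (hg : IsExchangeablePrior g) :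
    directionMoment g = ((t : ℝ) - 1)⁻¹ • Bmat t := by
  have ht : (2 : ℝ) ≤ t := by exact_mod_cast hg.two_le
  rw [eq_inv_smul_iff₀ (by linarith), natCast_sub_one_smul_eq_trace_smul_Bmat
    hg.directionMoment_submatrix hg.directionMoment_mulVec_one, hg.trace_directionMoment, one_smul]

end IsExchangeablePrior

lemma dotProduct_mulVec_self_div {m : Type*} [Fintype m] (M : Matrix m m ℝ) (v : m → ℝ) :
    v ⬝ᵥ (M *ᵥ v) / (v ⬝ᵥ v) = ∑ i, ∑ j, M i j * (v i * v j / (v ⬝ᵥ v)) := by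
  simp only [← mul_div_assoc, ← Finset.sum_div]
  congr 1
  simp only [dotProduct, mulVec, Finset.mul_sum]
  exact Finset.sum_congr rfl fun i _ => Finset.sum_congr rfl fun j _ => by ring

section RayleighQuotient

variable {t : ℕ} (g : Measure (Fin t → ℝ)) (M : Matrix (Fin t) (Fin t) ℝ)

lemma integrable_dotProduct_mulVec_self_div [IsFiniteMeasure g] :
    Integrable (fun τ => τ ⬝ᵥ (M *ᵥ τ) / (τ ⬝ᵥ τ)) g := by
  simp only [dotProduct_mulVec_self_div]
  exact integrable_finsetSum _ fun i _ => integrable_finsetSum _ fun j _ =>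
    (integrable_apply_mul_apply_div g i j).const_mul _

lemma integral_dotProduct_mulVec_self_div [IsFiniteMeasure g] :
    ∫ τ, τ ⬝ᵥ (M *ᵥ τ) / (τ ⬝ᵥ τ) ∂g = (M * (directionMoment g)ᵀ).trace := by
  have hint (i j : Fin t) := (integrable_apply_mul_apply_div g i j).const_mul (M i j)
  simp only [dotProduct_mulVec_self_div]
  rw [integral_finsetSum _ fun i _ => integrable_finsetSum _ fun j _ => hint i j]
  refine Finset.sum_congr rfl fun i _ => ?_
  rw [integral_finsetSum _ fun j _ => hint i j]
  exact Finset.sum_congr rfl fun j _ => integral_const_mul _ _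

end RayleighQuotient

lemma IsExchangeablePrior.integral_dotProduct_mulVec_self_div {t : ℕ} {g : Measure (Fin t → ℝ)}
    (hg : IsExchangeablePrior g) {M : Matrix (Fin t) (Fin t) ℝ} (hM : M *ᵥ 1 = 0) :
    ∫ τ, τ ⬝ᵥ (M *ᵥ τ) / (τ ⬝ᵥ τ) ∂g = M.trace / ((t : ℝ) - 1) := by
  have := hg.1
  rw [_root_.integral_dotProduct_mulVec_self_div, hg.directionMoment_eq, transpose_smul,
    Bmat_transpose, Matrix.mul_smul, mul_Bmat hM, trace_smul, smul_eq_mul, div_eq_inv_mul]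

/-! ### The upper bound -/

section UpperBound

variable {p t n : ℕ} {S : Matrix (Fin p) (Fin p) ℝ} {w : TrtSeq p t → ℝ}

lemma qSeq_le_qMax (S : Matrix (Fin p) (Fin p) ℝ) (s : TrtSeq p t) (x : ℝ) :
    qSeq S s x ≤ qMax p t S x :=
  le_csSup (Set.finite_range _).bddAbove ⟨s, rfl⟩

lemma qD_le_qMax (S : Matrix (Fin p) (Fin p) ℝ) (hw : IsDesign w) (x : ℝ) :
    qD S w x ≤ qMax p t S x :=
  calc qD S w x ≤ ∑ s, w s * qMax p t S x :=
        Finset.sum_le_sum fun s _ => mul_le_mul_of_nonneg_left (qSeq_le_qMax S s x) (hw.1 s)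
    _ = qMax p t S x := by rw [← Finset.sum_mul, hw.2, one_mul]

lemma mD_le_div (hS : S.PosDef) {τ : Fin t → ℝ} (hτ : ∑ i, τ i = 0) (hτ0 : τ ≠ 0)
    (hpos : 0 < τ ⬝ᵥ (CD n S w 1 1 *ᵥ τ)) (l0 x : ℝ) :
    mD n S w l0 τ ≤ τ ⬝ᵥ (quadPencil (ChatD n S w) x *ᵥ τ) / (τ ⬝ᵥ τ) := by
  rw [mD_eq_contrastMin]
  exact (contrastMin_le_div _ hτ hτ0).trans (div_le_div_of_nonneg_right
    (dotProduct_CInfo_mulVec_self_le hS hpos l0 x) (dotProduct_self_pos hτ0).le)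

lemma EAdmissible.Ecrit_le_qD {g : Measure (Fin t → ℝ)} {l0 : ℝ} (hS : S.PosDef)
    (hg : IsExchangeablePrior g) (hw : EAdmissible n S g l0 w) (x : ℝ) :
    Ecrit n S g l0 w ≤ n * qD S w x / ((t : ℝ) - 1) := by
  have := hg.1
  calc Ecrit n S g l0 w
      ≤ ∫ τ, τ ⬝ᵥ (quadPencil (ChatD n S w) x *ᵥ τ) / (τ ⬝ᵥ τ) ∂g := by
        refine integral_mono_ae hw.2.2 (integrable_dotProduct_mulVec_self_div g _) ?_
        filter_upwards [hg.ae_contrast, hw.2.1] with τ ⟨hτ, hτ0⟩ hpos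
        exact mD_le_div hS hτ hτ0 hpos l0 x
    _ = n * qD S w x / ((t : ℝ) - 1) := by
        rw [hg.integral_dotProduct_mulVec_self_div (quadPencil_ChatD_mulVec_one n S w x),
          trace_quadPencil_ChatD, quadPencil_cD hS]

lemma EAdmissible.Ecrit_le {g : Measure (Fin t → ℝ)} {l0 : ℝ} (hS : S.PosDef)
    (hg : IsExchangeablePrior g) (hw : EAdmissible n S g l0 w) :
    Ecrit n S g l0 w ≤ n * yStar p t S / ((t : ℝ) - 1) := by
  have ht : (0 : ℝ) < (t : ℝ) - 1 := by
    have : (2 : ℝ) ≤ t := by exact_mod_cast hg.two_le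
    linarith
  rw [le_div_iff₀ ht, yStar, Real.mul_iInf_of_nonneg n.cast_nonneg]
  refine le_ciInf fun x => ?_
  calc Ecrit n S g l0 w * ((t : ℝ) - 1) ≤ n * qD S w x :=
        (le_div_iff₀ ht).1 (hw.Ecrit_le_qD hS hg x)
    _ ≤ n * qMax p t S x := mul_le_mul_of_nonneg_left (qD_le_qMax S hw.1 x) n.cast_nonneg

end UpperBound

/-! ### Symmetric designs -/

/-- Relabelling of treatments as a permutation of the set of treatment sequences; its underlying
function is `permSeq σ`. -/
def permSeqEquiv (p : ℕ) {t : ℕ} (σ : Equiv.Perm (Fin t)) : Equiv.Perm (TrtSeq p t) :=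
  (Equiv.refl (Fin p)).arrowCongr σ

section Symmetrize

variable {p t : ℕ} {w : TrtSeq p t → ℝ}

lemma sum_comp_permSeq (σ : Equiv.Perm (Fin t)) (f : TrtSeq p t → ℝ) :
    ∑ s, f (permSeq σ s) = ∑ s, f s :=
  Equiv.sum_comp (permSeqEquiv p σ) f

lemma sum_permDesign_mul {f : TrtSeq p t → ℝ}
    (hf : ∀ (σ : Equiv.Perm (Fin t)) s, f (permSeq σ s) = f s) (w : TrtSeq p t → ℝ)
    (σ : Equiv.Perm (Fin t)) : ∑ s, permDesign σ w s * f s = ∑ s, w s * f s := by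
  rw [← sum_comp_permSeq σ⁻¹ fun s => w s * f s]
  simp only [permDesign, hf]

lemma sum_symmetrize_mul {f : TrtSeq p t → ℝ}
    (hf : ∀ (σ : Equiv.Perm (Fin t)) s, f (permSeq σ s) = f s) (w : TrtSeq p t → ℝ) :
    ∑ s, symmetrize w s * f s = ∑ s, w s * f s := by
  have hfact : (t.factorial : ℝ) ≠ 0 := Nat.cast_ne_zero.2 t.factorial_ne_zero
  calc ∑ s, symmetrize w s * f s
      = (t.factorial : ℝ)⁻¹ * ∑ σ : Equiv.Perm (Fin t), ∑ s, permDesign σ w s * f s := by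
        simp only [symmetrize, mul_assoc, Finset.sum_mul, ← Finset.mul_sum]
        rw [Finset.sum_comm]
    _ = ∑ s, w s * f s := by
        simp only [sum_permDesign_mul hf, Finset.sum_const, Finset.card_univ, Fintype.card_perm,
          Fintype.card_fin, nsmul_eq_mul, inv_mul_cancel_left₀ hfact]

lemma IsDesign.symmetrize (hw : IsDesign w) : IsDesign (symmetrize w) := by
  refine ⟨fun s => mul_nonneg (inv_nonneg.2 (Nat.cast_nonneg _))
    (Finset.sum_nonneg fun σ _ => hw.1 _), ?_⟩
  simpa only [mul_one, hw.2] using sum_symmetrize_mul (f := fun _ => 1) (fun _ _ => rfl) w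

lemma isSymmetricDesign_symmetrize (w : TrtSeq p t → ℝ) : IsSymmetricDesign (symmetrize w) := by
  intro σ s
  refine congrArg ((t.factorial : ℝ)⁻¹ * ·) ?_
  rw [← Equiv.sum_comp (Equiv.mulLeft σ) fun ρ => permDesign ρ w (permSeq σ s)]
  refine Finset.sum_congr rfl fun ρ _ => congrArg w (funext fun k => ?_)
  simp only [permSeq, Equiv.coe_mulLeft, _root_.mul_inv_rev, Equiv.Perm.mul_apply,
    Equiv.Perm.inv_def, Equiv.symm_apply_apply]

lemma qD_symmetrize (S : Matrix (Fin p) (Fin p) ℝ) (w : TrtSeq p t → ℝ) (x : ℝ) :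
    qD S (symmetrize w) x = qD S w x :=
  sum_symmetrize_mul (fun σ s => qSeq_permSeq S σ s x) w

end Symmetrize

section MaximinDesign

variable {p t : ℕ} {S : Matrix (Fin p) (Fin p) ℝ}

lemma yStar_le_of_forall_qSeq_le [NeZero t] {y x₀ : ℝ} (hy : ∀ s : TrtSeq p t, qSeq S s x₀ ≤ y)
    {w : TrtSeq p t → ℝ} (hw : IsDesign w) (hlow : BddBelow (Set.range (qD S w))) :
    yStar p t S ≤ y := by
  have hbdd : BddBelow (Set.range (qMax p t S)) := by
    obtain ⟨b, hb⟩ := hlow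
    exact ⟨b, Set.forall_mem_range.2 fun x => (hb ⟨x, rfl⟩).trans (qD_le_qMax S hw x)⟩
  exact (ciInf_le hbdd x₀).trans
    (csSup_le (Set.range_nonempty _) (Set.forall_mem_range.2 hy))

lemma exists_isDesign_forall_yStar_le_qD (hp : 2 ≤ p) (ht : 2 ≤ t) (hS : S.PosDef) :
    ∃ w : TrtSeq p t → ℝ, IsDesign w ∧ ∀ x, yStar p t S ≤ qD S w x := by
  have : NeZero t := ⟨by lia⟩
  obtain ⟨x₀, w, hw, hle⟩ := exists_forall_le_sum_mul_of_convexOn (f := qSeq (p := p) (t := t) S)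
    (fun s => convexOn_quadratic (cseq_one_one_pos hp ht hS s).le)
    (fun s => tendsto_quadratic_cocompact_atTop (cseq_one_one_pos hp ht hS s))
  refine ⟨w, hw, fun x => yStar_le_of_forall_qSeq_le (fun s => hle s x) hw ?_⟩
  exact ⟨qSeq S 0 x₀, Set.forall_mem_range.2 fun x => hle 0 x⟩

lemma exists_isSymmetricDesign_forall_yStar_le_qD (hp : 2 ≤ p) (ht : 2 ≤ t) (hS : S.PosDef) :
    ∃ w : TrtSeq p t → ℝ, IsDesign w ∧ IsSymmetricDesign w ∧ ∀ x, yStar p t S ≤ qD S w x := by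
  obtain ⟨w, hw, hle⟩ := exists_isDesign_forall_yStar_le_qD hp ht hS
  exact ⟨symmetrize w, hw.symmetrize, isSymmetricDesign_symmetrize w,
    fun x => (hle x).trans_eq (qD_symmetrize S w x).symm⟩

end MaximinDesign

namespace IsSymmetricDesign

variable {p t n : ℕ} {S : Matrix (Fin p) (Fin p) ℝ} {w : TrtSeq p t → ℝ}

lemma meanIncidence_eq_zero (hw : IsSymmetricDesign w) (i : Fin 2) : meanIncidence w i = 0 := by
  have hinv (σ : Equiv.Perm (Fin t)) : (meanIncidence w i).submatrix id σ = meanIncidence w i := by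
    ext k a
    simp only [submatrix_apply, meanIncidence, Matrix.sum_apply, Matrix.smul_apply]
    rw [← sum_comp_permSeq σ]
    exact Finset.sum_congr rfl fun s _ => congrArg₂ (· • ·) (hw σ s)
      (congrFun₂ (Gmat_mul_Bmat_permSeq σ s i) k a)
  ext k a
  exact congrFun (eq_zero_of_perm_invariant (fun σ a => congrFun₂ (hinv σ) k a)
    ((dotProduct_one _).symm.trans (congrFun (meanIncidence_mulVec_one w i) k))) a

lemma ChatD_submatrix (hw : IsSymmetricDesign w) (i j : Fin 2) (σ : Equiv.Perm (Fin t)) :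
    (ChatD n S w i j).submatrix σ σ = ChatD n S w i j := by
  ext a b
  simp only [submatrix_apply, ChatD, Matrix.sum_apply, Matrix.smul_apply]
  rw [← sum_comp_permSeq σ]
  exact congrArg _ (Finset.sum_congr rfl fun s _ => congrArg₂ (· • ·) (hw σ s)
    (congrFun₂ (Chat_permSeq S σ s i j) a b))

lemma CD_eq_smul_Bmat (ht : 2 ≤ t) (hw : IsSymmetricDesign w) (i j : Fin 2) :
    CD n S w i j = (cD n S w i j / ((t : ℝ) - 1)) • Bmat t := by
  have ht' : (t : ℝ) - 1 ≠ 0 := by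
    rify at ht
    linarith
  rw [div_eq_inv_mul, mul_smul, eq_inv_smul_iff₀ ht', CD_eq, hw.meanIncidence_eq_zero j,
    Matrix.mul_zero, smul_zero, sub_zero]
  exact natCast_sub_one_smul_eq_trace_smul_Bmat (hw.ChatD_submatrix i j)
    (ChatD_mulVec_one n S w i j)

lemma dotProduct_CD_mulVec (ht : 2 ≤ t) (hw : IsSymmetricDesign w) (i j : Fin 2)
    (u : Fin t → ℝ) {v : Fin t → ℝ} (hv : ∑ i, v i = 0) :
    u ⬝ᵥ (CD n S w i j *ᵥ v) = cD n S w i j / ((t : ℝ) - 1) * (u ⬝ᵥ v) := by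
  rw [hw.CD_eq_smul_Bmat ht, smul_mulVec, Bmat_mulVec hv, dotProduct_smul, smul_eq_mul]

lemma dotProduct_CInfo_mulVec (hS : S.PosDef) (hw : IsSymmetricDesign w) (hc : cD n S w 1 1 ≠ 0)
    (l0 : ℝ) {τ l : Fin t → ℝ} (hτ : ∑ i, τ i = 0) (hτ0 : τ ≠ 0) (hl : ∑ i, l i = 0) :
    l ⬝ᵥ (CInfo n S w τ l0 *ᵥ l) = (n * qD S w (xD n S w) * (l ⬝ᵥ l) +
      (cD n S w 0 1 + l0 * cD n S w 1 1) ^ 2 / cD n S w 1 1 *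
        (l ⬝ᵥ l - (l ⬝ᵥ τ) ^ 2 / (τ ⬝ᵥ τ))) / ((t : ℝ) - 1) := by
  have ht : 2 ≤ t := two_le_of_sum_eq_zero hτ hτ0
  have hr : τ ⬝ᵥ τ ≠ 0 := (dotProduct_self_pos hτ0).ne'
  calc l ⬝ᵥ (CInfo n S w τ l0 *ᵥ l)
      = (quadPencil (cD n S w) l0 * (l ⬝ᵥ l) - (cD n S w 0 1 + l0 * cD n S w 1 1) ^ 2 /
          cD n S w 1 1 * ((l ⬝ᵥ τ) ^ 2 / (τ ⬝ᵥ τ))) / ((t : ℝ) - 1) := by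
        simp only [CInfo_eq, quadPencil, add_mulVec, sub_mulVec, smul_mulVec, dotProduct_add,
          dotProduct_sub, dotProduct_smul, smul_eq_mul, dotProduct_mul_vecMulVec_mul_mulVec,
          hw.dotProduct_CD_mulVec ht _ _ _ hl, hw.dotProduct_CD_mulVec ht _ _ _ hτ, cD_comm hS 1 0,
          dotProduct_comm τ l]
        have ht' : (t : ℝ) - 1 ≠ 0 := by
          rify at ht
          linarith
        field_simp
    _ = _ := by rw [quadPencil_cD_eq_add_sq_div hS hc]; ring

lemma dotProduct_CInfo_mulVec_self_div (hS : S.PosDef) (hw : IsSymmetricDesign w)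
    (hc : cD n S w 1 1 ≠ 0) (l0 : ℝ) {τ : Fin t → ℝ} (hτ : ∑ i, τ i = 0) (hτ0 : τ ≠ 0) :
    τ ⬝ᵥ (CInfo n S w τ l0 *ᵥ τ) / (τ ⬝ᵥ τ) = n * qD S w (xD n S w) / ((t : ℝ) - 1) := by
  have hr : τ ⬝ᵥ τ ≠ 0 := (dotProduct_self_pos hτ0).ne'
  rw [hw.dotProduct_CInfo_mulVec hS hc l0 hτ hτ0 hτ, sq (τ ⬝ᵥ τ), mul_self_div_self, sub_self,
    mul_zero, add_zero, div_right_comm, mul_div_cancel_right₀ _ hr]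

lemma mD_eq (hS : S.PosDef) (hw : IsSymmetricDesign w) (hc : 0 < cD n S w 1 1) (l0 : ℝ)
    {τ : Fin t → ℝ} (hτ : ∑ i, τ i = 0) (hτ0 : τ ≠ 0) :
    mD n S w l0 τ = n * qD S w (xD n S w) / ((t : ℝ) - 1) := by
  have hτmin := hw.dotProduct_CInfo_mulVec_self_div hS hc.ne' l0 hτ hτ0
  rw [mD_eq_contrastMin, contrastMin_eq_div hτ hτ0, hτmin]
  intro l hl
  rw [hτmin, hw.dotProduct_CInfo_mulVec hS hc.ne' l0 hτ hτ0 hl, div_mul_eq_mul_div]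
  have ht : (0 : ℝ) ≤ (t : ℝ) - 1 := by
    have := two_le_of_sum_eq_zero hτ hτ0
    rify at this
    linarith
  have hcs : (l ⬝ᵥ τ) ^ 2 / (τ ⬝ᵥ τ) ≤ l ⬝ᵥ l :=
    (div_le_iff₀ (dotProduct_self_pos hτ0)).2 (sq_dotProduct_le l τ)
  exact div_le_div_of_nonneg_right (le_add_of_nonneg_right
    (mul_nonneg (div_nonneg (sq_nonneg _) hc.le) (sub_nonneg.2 hcs))) ht

lemma dotProduct_CD_one_one_mulVec_pos (hw : IsSymmetricDesign w) (hc : 0 < cD n S w 1 1)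
    {τ : Fin t → ℝ} (hτ : ∑ i, τ i = 0) (hτ0 : τ ≠ 0) : 0 < τ ⬝ᵥ (CD n S w 1 1 *ᵥ τ) := by
  have ht : 2 ≤ t := two_le_of_sum_eq_zero hτ hτ0
  rw [hw.dotProduct_CD_mulVec ht 1 1 τ hτ]
  rify at ht
  exact mul_pos (div_pos hc (by linarith)) (dotProduct_self_pos hτ0)

variable {g : Measure (Fin t → ℝ)}

lemma mD_ae_eq (hS : S.PosDef) (hw : IsSymmetricDesign w) (hc : 0 < cD n S w 1 1) (l0 : ℝ)
    (hg : IsExchangeablePrior g) :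
    mD n S w l0 =ᵐ[g] fun _ => n * qD S w (xD n S w) / ((t : ℝ) - 1) :=
  hg.ae_contrast.mono fun _ hτ => hw.mD_eq hS hc l0 hτ.1 hτ.2

lemma eAdmissible (hS : S.PosDef) (hw : IsSymmetricDesign w) (hd : IsDesign w)
    (hc : 0 < cD n S w 1 1) (l0 : ℝ) (hg : IsExchangeablePrior g) : EAdmissible n S g l0 w := by
  have := hg.1
  exact ⟨hd, hg.ae_contrast.mono fun _ hτ => hw.dotProduct_CD_one_one_mulVec_pos hc hτ.1 hτ.2,
    (integrable_const _).congr (hw.mD_ae_eq hS hc l0 hg).symm⟩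

lemma Ecrit_eq (hS : S.PosDef) (hw : IsSymmetricDesign w) (hc : 0 < cD n S w 1 1) (l0 : ℝ)
    (hg : IsExchangeablePrior g) :
    Ecrit n S g l0 w = n * qD S w (xD n S w) / ((t : ℝ) - 1) := by
  have := hg.1
  rw [Ecrit, integral_congr_ae (hw.mD_ae_eq hS hc l0 hg), integral_const, probReal_univ, one_smul]

end IsSymmetricDesign

lemma exists_eAdmissible_le_Ecrit {p t n : ℕ} (hp : 2 ≤ p) (hn : 1 ≤ n)
    {S : Matrix (Fin p) (Fin p) ℝ} (hS : S.PosDef) (l0 : ℝ) {g : Measure (Fin t → ℝ)}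
    (hg : IsExchangeablePrior g) :
    ∃ w, EAdmissible n S g l0 w ∧ n * yStar p t S / ((t : ℝ) - 1) ≤ Ecrit n S g l0 w := by
  obtain ⟨w, hd, hw, hy⟩ := exists_isSymmetricDesign_forall_yStar_le_qD hp hg.two_le hS
  have hc : 0 < cD n S w 1 1 := cD_one_one_pos hn hp hg.two_le hS hd
  have ht : (2 : ℝ) ≤ t := by exact_mod_cast hg.two_le
  refine ⟨w, hw.eAdmissible hS hd hc l0 hg, ?_⟩
  rw [hw.Ecrit_eq hS hc l0 hg]
  exact div_le_div_of_nonneg_right (mul_le_mul_of_nonneg_left (hy _) n.cast_nonneg) (by linarith)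

theorem stmt6_general {p t n : ℕ} (hp : 2 ≤ p) (hn : 1 ≤ n) {S : Matrix (Fin p) (Fin p) ℝ}
    (hS : S.PosDef) {l0 : ℝ} {g : Measure (Fin t → ℝ)} (hg : IsExchangeablePrior g)
    {w : TrtSeq p t → ℝ} (hadm : EAdmissible n S g l0 w) :
    EOptimal n S g l0 w ↔ Ecrit n S g l0 w = (n : ℝ) * yStar p t S / ((t : ℝ) - 1) := by
  constructor
  · intro hopt
    obtain ⟨w', hw', hle⟩ := exists_eAdmissible_le_Ecrit hp hn hS l0 hg
    exact (hadm.Ecrit_le hS hg).antisymm (hle.trans (hopt w' hw'))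
  · intro heq w' hw'
    exact (hw'.Ecrit_le hS hg).trans_eq heq.symm

/-- a design is `E_{g,λ0}`-optimal iff its E-criterion value equals
`n y*/(t-1)`. -/
theorem stmt6 (p t n : ℕ) (hp : 2 ≤ p) (ht : 3 ≤ t) (hn : 1 ≤ n)
    (S : Matrix (Fin p) (Fin p) ℝ) (hS : S.PosDef)
    (l0 : ℝ) (g : Measure (Fin t → ℝ)) (hg : IsExchangeablePrior g)
    (w : TrtSeq p t → ℝ) (hadm : EAdmissible n S g l0 w) :
    EOptimal n S g l0 w ↔
      Ecrit n S g l0 w = (n : ℝ) * yStar p t S / ((t : ℝ) - 1) :=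
  stmt6_general hp hn hS hg hadm
end
end

section
/- Let d be a design, λ0 ∈ ℝ, x ∈ ℝ, and τ0 ∈ ℝ^t with 1_t′τ0 = 0, τ0 ≠ 0 and τ0′ C_{d22} τ0 > 0, and assume C_{d22} is positive semidefinite. Suppose C_{d11} + x C_{d12} = (n y*/(t−1)) B_t and C_{d21} + x C_{d22} = 0. Then C_{d12} = C_{d21}, the Fisher information matrix equals C_{d,τ0,λ0} = (n y*/(t−1)) B_t + (λ0 − x)² C_{d22} − (λ0 − x)² C_{d22} τ0 τ0′ C_{d22} / (τ0′ C_{d22} τ0), and for every ℓ ∈ ℝ^t with 1_t′ℓ = 0 and ℓ′ℓ = 1 one has ℓ′ C_{d,τ0,λ0} ℓ ≥ n y*/(t−1), with equality for ℓ = τ0/‖τ0‖. -/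
open Matrix MeasureTheory
open scoped Classical

noncomputable section

/-!
Replacing the pair of regressors `(T, F)` by `(T + x F, F)` replaces `λ0` by `λ0 - x` and leaves the
information matrix unchanged, since `T + λ0 F = (T + x F) + (λ0 - x) F`. The hypotheses say that
after this substitution the off-diagonal blocks vanish and the first diagonal block is a multiple
of `B_t`, so that the information matrix is that multiple plus `(λ0 - x)²` times
`C - C τ0 τ0' C / (τ0' C τ0)`, where `C = C_{d22}`. The latter matrix is `Q' C Q` for the
`C`-orthogonal projection `Q` along `τ0`; hence it is positive semidefinite and kills `τ0`.
-/

section WedderburnReduction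

variable {ι K : Type*} [Fintype ι] [Field K]

/-- The Wedderburn rank reduction `C - C τ τ' C / (τ' C τ)` of `C` along `τ`, the correction that
the information matrix of the proportional model carries for the unknown proportionality factor.
It is `C` itself when `τ' C τ = 0`. -/
def wedderburnReduction (C : Matrix ι ι K) (τ : ι → K) : Matrix ι ι K :=
  C - (τ ⬝ᵥ (C *ᵥ τ))⁻¹ • (C * vecMulVec τ τ * C)

theorem wedderburnReduction_mulVec_self {C : Matrix ι ι K} {τ : ι → K}
    (hτ : τ ⬝ᵥ (C *ᵥ τ) ≠ 0) : wedderburnReduction C τ *ᵥ τ = 0 := by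
  have hCττC : (C * vecMulVec τ τ * C) *ᵥ τ = (τ ⬝ᵥ (C *ᵥ τ)) • (C *ᵥ τ) := by
    rw [← mulVec_mulVec, ← mulVec_mulVec, vecMulVec_mulVec, op_smul_eq_smul, mulVec_smul]
  rw [wedderburnReduction, sub_mulVec, smul_mulVec, hCττC, inv_smul_smul₀ hτ, sub_self]

theorem wedderburnReduction_eq_transpose_mul_mul [DecidableEq ι] {C : Matrix ι ι K}
    (hC : C.IsSymm) (τ : ι → K) :
    wedderburnReduction C τ =
      (1 - (τ ⬝ᵥ (C *ᵥ τ))⁻¹ • (vecMulVec τ τ * C))ᵀ * C *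
        (1 - (τ ⬝ᵥ (C *ᵥ τ))⁻¹ • (vecMulVec τ τ * C)) := by
  set a := τ ⬝ᵥ (C *ᵥ τ) with ha
  set V := vecMulVec τ τ with hV
  have hVCV : V * C * V = a • V := by
    rw [Matrix.mul_assoc, hV, mul_vecMulVec, vecMulVec_mul_vecMulVec, vecMulVec_smul, ha]
  have hQ : (1 - a⁻¹ • (V * C))ᵀ = 1 - a⁻¹ • (C * V) := by
    simp only [transpose_sub, transpose_one, transpose_smul, transpose_mul, hC.eq, hV,
      transpose_vecMulVec]
  have hCVCVC : C * V * (C * (V * C)) = a • (C * V * C) := by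
    rw [← Matrix.mul_assoc C V C, ← Matrix.smul_mul, ← Matrix.mul_smul, ← hVCV]
    simp only [Matrix.mul_assoc]
  have ha_inv : a⁻¹ * (a⁻¹ * a) = a⁻¹ := by
    rcases eq_or_ne a 0 with h | h <;> simp [h]
  rw [hQ, wedderburnReduction, ← ha, ← hV]
  simp only [Matrix.sub_mul, Matrix.mul_sub, Matrix.one_mul, Matrix.mul_one, Matrix.smul_mul,
    Matrix.mul_smul, Matrix.mul_assoc] at hCVCVC ⊢
  rw [hCVCVC, smul_smul, smul_sub, smul_smul, ha_inv, sub_self, sub_zero]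

theorem posSemidef_wedderburnReduction {C : Matrix ι ι ℝ} (hC : C.PosSemidef) (τ : ι → ℝ) :
    (wedderburnReduction C τ).PosSemidef := by
  rw [wedderburnReduction_eq_transpose_mul_mul (isHermitian_iff_isSymm.1 hC.isHermitian),
    ← conjTranspose_eq_transpose_of_trivial]
  exact hC.conjTranspose_mul_mul_same _

end WedderburnReduction

section ProportionalInfo

variable {ι K : Type*} [Fintype ι] [Field K]

/-- The information matrix of the proportional model built from the blocks of an arbitrary
information matrix `(A, B; B', C)` for direct and carryover effects; the blocks `B` and `B'` are
independent, so that no symmetry is assumed. -/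
def proportionalInfo (A B B' C : Matrix ι ι K) (τ : ι → K) (l : K) : Matrix ι ι K :=
  A + l • (B + B') + l ^ 2 • C -
    (τ ⬝ᵥ (C *ᵥ τ))⁻¹ • ((B + l • C) * vecMulVec τ τ * (B' + l • C))

theorem CInfo_eq_proportionalInfo {p t : ℕ} (n : ℕ) (S : Matrix (Fin p) (Fin p) ℝ)
    (w : TrtSeq p t → ℝ) (τ0 : Fin t → ℝ) (l0 : ℝ) :
    CInfo n S w τ0 l0 =
      proportionalInfo (CD n S w 0 0) (CD n S w 0 1) (CD n S w 1 0) (CD n S w 1 1) τ0 l0 :=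
  rfl

theorem proportionalInfo_shift (A B B' C : Matrix ι ι K) (τ : ι → K) (l x : K) :
    proportionalInfo (A + x • B + x • (B' + x • C)) (B + x • C) (B' + x • C) C τ (l - x) =
      proportionalInfo A B B' C τ l := by
  have hshift (D : Matrix ι ι K) : D + x • C + (l - x) • C = D + l • C := by module
  rw [proportionalInfo, proportionalInfo, hshift, hshift]
  module

theorem proportionalInfo_zero_zero (A C : Matrix ι ι K) (τ : ι → K) (l : K) :
    proportionalInfo A 0 0 C τ l = A + l ^ 2 • wedderburnReduction C τ := by
  simp only [proportionalInfo, wedderburnReduction, zero_add, Matrix.smul_mul, Matrix.mul_smul]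
  module

theorem proportionalInfo_eq_add_smul_wedderburnReduction {A B B' C : Matrix ι ι K} {x : K}
    (hB : B + x • C = 0) (hB' : B' + x • C = 0) (τ : ι → K) (l : K) :
    proportionalInfo A B B' C τ l = A + x • B + (l - x) ^ 2 • wedderburnReduction C τ := by
  rw [← proportionalInfo_shift A B B' C τ l x, hB, hB', smul_zero, add_zero,
    proportionalInfo_zero_zero]

end ProportionalInfo

section Symmetry

theorem isSymm_Jmat (m : ℕ) : (Jmat m).IsSymm :=
  rfl

theorem isSymm_Bmat (t : ℕ) : (Bmat t).IsSymm :=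
  isSymm_one.sub ((isSymm_Jmat t).smul _)

theorem isSymm_Btil {p : ℕ} {S : Matrix (Fin p) (Fin p) ℝ} (hS : S.IsSymm) :
    (Btil S).IsSymm := by
  simp only [IsSymm, Btil, transpose_sub, transpose_smul, transpose_mul, transpose_nonsing_inv,
    hS.eq, (isSymm_Jmat p).eq, Matrix.mul_assoc]

theorem transpose_CD {p t : ℕ} (n : ℕ) {S : Matrix (Fin p) (Fin p) ℝ} (hS : S.IsSymm)
    (w : TrtSeq p t → ℝ) (i j : Fin 2) : (CD n S w i j)ᵀ = CD n S w j i := by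
  simp only [CD, ChatD, Chat, transpose_sub, transpose_smul, transpose_mul, transpose_sum,
    transpose_transpose, (isSymm_Btil hS).eq, (isSymm_Bmat t).eq, Matrix.mul_assoc]

end Symmetry

section Contrasts

theorem Bmat_mulVec_of_sum_eq_zero {t : ℕ} {l : Fin t → ℝ} (hl : ∑ i, l i = 0) :
    Bmat t *ᵥ l = l := by
  have hJ : Jmat t *ᵥ l = 0 := by
    ext i
    simp [Jmat, mulVec, dotProduct, hl]
  rw [Bmat, sub_mulVec, one_mulVec, smul_mulVec, hJ, smul_zero, sub_zero]

theorem dotProduct_smul_Bmat_add_smul_mulVec {t : ℕ} {l : Fin t → ℝ} (hl : ∑ i, l i = 0)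
    (hl1 : l ⬝ᵥ l = 1) (c a : ℝ) (D : Matrix (Fin t) (Fin t) ℝ) :
    l ⬝ᵥ ((c • Bmat t + a • D) *ᵥ l) = c + a * (l ⬝ᵥ (D *ᵥ l)) := by
  simp only [add_mulVec, smul_mulVec, dotProduct_add, dotProduct_smul, smul_eq_mul,
    Bmat_mulVec_of_sum_eq_zero hl, hl1, mul_one]

theorem inv_sqrt_smul_dotProduct_self {ι : Type*} [Fintype ι] {v : ι → ℝ} (hv : v ≠ 0) :
    ((√(v ⬝ᵥ v))⁻¹ • v) ⬝ᵥ ((√(v ⬝ᵥ v))⁻¹ • v) = 1 := by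
  have hpos : 0 < v ⬝ᵥ v := by simpa using dotProduct_self_star_pos_iff.2 hv
  rw [smul_dotProduct, dotProduct_smul, smul_eq_mul, smul_eq_mul, ← mul_assoc, ← mul_inv,
    Real.mul_self_sqrt hpos.le, inv_mul_cancel₀ hpos.ne']

end Contrasts

theorem stmt7_general {p t : ℕ} (n : ℕ) {S : Matrix (Fin p) (Fin p) ℝ} (hS : S.IsSymm)
    (w : TrtSeq p t → ℝ) (l0 x c : ℝ) (τ0 : Fin t → ℝ) (hτsum : ∑ i, τ0 i = 0)
    (hC : τ0 ⬝ᵥ (CD n S w 1 1 *ᵥ τ0) ≠ 0) (hpsd : (CD n S w 1 1).PosSemidef)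
    (h1 : CD n S w 0 0 + x • CD n S w 0 1 = c • Bmat t)
    (h2 : CD n S w 1 0 + x • CD n S w 1 1 = 0) :
    CD n S w 0 1 = CD n S w 1 0 ∧
    CInfo n S w τ0 l0 =
      c • Bmat t + (l0 - x) ^ 2 • CD n S w 1 1 -
        ((l0 - x) ^ 2 / (τ0 ⬝ᵥ (CD n S w 1 1 *ᵥ τ0))) •
          (CD n S w 1 1 * vecMulVec τ0 τ0 * CD n S w 1 1) ∧
    (∀ l : Fin t → ℝ, ∑ i, l i = 0 → l ⬝ᵥ l = 1 → c ≤ l ⬝ᵥ (CInfo n S w τ0 l0 *ᵥ l)) ∧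
    ((√(τ0 ⬝ᵥ τ0))⁻¹ • τ0) ⬝ᵥ (CInfo n S w τ0 l0 *ᵥ ((√(τ0 ⬝ᵥ τ0))⁻¹ • τ0)) = c := by
  have h2' : CD n S w 0 1 + x • CD n S w 1 1 = 0 := by
    simpa [transpose_CD n hS] using congrArg transpose h2
  have hInfo : CInfo n S w τ0 l0 =
      c • Bmat t + (l0 - x) ^ 2 • wedderburnReduction (CD n S w 1 1) τ0 := by
    rw [CInfo_eq_proportionalInfo, proportionalInfo_eq_add_smul_wedderburnReduction h2' h2, h1]
  refine ⟨add_right_cancel (h2'.trans h2.symm), ?_, fun l hl hl1 ↦ ?_, ?_⟩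
  · rw [hInfo, wedderburnReduction, smul_sub, smul_smul, ← div_eq_mul_inv, add_sub_assoc]
  · have hD := (posSemidef_wedderburnReduction hpsd τ0).dotProduct_mulVec_nonneg l
    rw [hInfo, dotProduct_smul_Bmat_add_smul_mulVec hl hl1]
    exact le_add_of_nonneg_right (mul_nonneg (sq_nonneg _) hD)
  · have hτ0 : τ0 ≠ 0 := by
      rintro rfl
      exact hC (zero_dotProduct _)
    have hsum : ∑ i, ((√(τ0 ⬝ᵥ τ0))⁻¹ • τ0) i = 0 := by
      simp only [Pi.smul_apply, ← Finset.smul_sum, hτsum, smul_zero]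
    rw [hInfo, dotProduct_smul_Bmat_add_smul_mulVec hsum (inv_sqrt_smul_dotProduct_self hτ0),
      mulVec_smul, wedderburnReduction_mulVec_self hC, smul_zero, dotProduct_zero, mul_zero,
      add_zero]

/-- consequences of the two matrix identities for the Fisher information. -/
theorem stmt7 (p t n : ℕ) (hp : 2 ≤ p) (ht : 3 ≤ t) (hn : 1 ≤ n)
    (S : Matrix (Fin p) (Fin p) ℝ) (hS : S.PosDef)
    (w : TrtSeq p t → ℝ) (hw : IsDesign w) (l0 x : ℝ)
    (τ0 : Fin t → ℝ) (hτsum : (∑ i, τ0 i) = 0) (hτ0 : τ0 ≠ 0)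
    (hC : 0 < τ0 ⬝ᵥ (CD n S w 1 1 *ᵥ τ0)) (hpsd : (CD n S w 1 1).PosSemidef)
    (h1 : CD n S w 0 0 + x • CD n S w 0 1 =
      ((n : ℝ) * yStar p t S / ((t : ℝ) - 1)) • Bmat t)
    (h2 : CD n S w 1 0 + x • CD n S w 1 1 = 0) :
    CD n S w 0 1 = CD n S w 1 0 ∧
    CInfo n S w τ0 l0 =
      ((n : ℝ) * yStar p t S / ((t : ℝ) - 1)) • Bmat t + (l0 - x) ^ 2 • CD n S w 1 1 -
        ((l0 - x) ^ 2 / (τ0 ⬝ᵥ (CD n S w 1 1 *ᵥ τ0))) •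
          (CD n S w 1 1 * vecMulVec τ0 τ0 * CD n S w 1 1) ∧
    (∀ l : Fin t → ℝ, (∑ i, l i) = 0 → l ⬝ᵥ l = 1 →
      (n : ℝ) * yStar p t S / ((t : ℝ) - 1) ≤ l ⬝ᵥ (CInfo n S w τ0 l0 *ᵥ l)) ∧
    ((Real.sqrt (τ0 ⬝ᵥ τ0))⁻¹ • τ0) ⬝ᵥ
        (CInfo n S w τ0 l0 *ᵥ ((Real.sqrt (τ0 ⬝ᵥ τ0))⁻¹ • τ0)) =
      (n : ℝ) * yStar p t S / ((t : ℝ) - 1) :=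
  stmt7_general n (isHermitian_iff_isSymm.1 hS.isHermitian) w l0 x _ τ0 hτsum hC.ne' hpsd h1 h2
end
end
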